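/- arXiv:2401.11786 — 2 statements merged into one kernel-verified Lean document; each statement's English description precedes it below -/
import Mathlib

section
/- Convergence of EIC. Let μ = μ_I > 0 and L = L_I be the strong convexity parameters of Theorem convexP with P = I, κ = L/μ, and 0 < τ ≤ κ^{−1/2}. Assume ρ_q satisfies λ₁ ≤ ρ_q ≤ λ₁ + (λ₂−λ₁)/(2+χ_I) and the initial vector x₀ ∈ X satisfies 0 ≤ Rq(x₀) − λ₁ ≤ (ρ_q − λ₁)/max{8κ, 2κ(1+τκ)²}, with z₀ = x₀. Generate for k ≥ 0: x̄_k = the M-normalization of x_k/(qᵀMx_k) + τ·z_k/(qᵀMz_k); r_k = 2(Ax̄_k − Rq(x̄_k)Mx̄_k); z_{k+1} = the M-normalization of (1−τ)z_k/(qᵀMz_k) + τ·x̄_k/(qᵀMx̄_k) − (τ(qᵀMx̄_k)/μ)·(I − qqᵀM)M⁻¹r_k; and x_{k+1} = the minimizer of Rq over X ∩ span{q, x_k, x̄_k, M⁻¹r_k}. Then Rq(x_k) ≤ Rq(x_{k−1}) ≤ … ≤ Rq(x₀), and Rq(x_k) − λ₁ ≤ 2(1−τ)^k (Rq(x₀)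 − λ₁) for all k ≥ 0. -/
open Matrix

noncomputable def Mnorm {n : ℕ} (M : Matrix (Fin n) (Fin n) ℝ) (x : Fin n → ℝ) : ℝ :=
  Real.sqrt (x ⬝ᵥ (M *ᵥ x))

noncomputable def Rq {n : ℕ} (A M : Matrix (Fin n) (Fin n) ℝ) (x : Fin n → ℝ) : ℝ :=
  (x ⬝ᵥ (A *ᵥ x)) / (x ⬝ᵥ (M *ᵥ x))

/-- ψ(x) = QᵀMx / (qᵀMx) -/
noncomputable def psiMap {n m : ℕ} (M : Matrix (Fin n) (Fin n) ℝ) (q : Fin n → ℝ)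
    (Q : Matrix (Fin n) (Fin m) ℝ) (x : Fin n → ℝ) : Fin m → ℝ :=
  (q ⬝ᵥ (M *ᵥ x))⁻¹ • ((Qᵀ * M) *ᵥ x)

/-- ψ†(y) = (Qy + q)/‖Qy + q‖_M -/
noncomputable def psiDag {n m : ℕ} (M : Matrix (Fin n) (Fin n) ℝ) (q : Fin n → ℝ)
    (Q : Matrix (Fin n) (Fin m) ℝ) (y : Fin m → ℝ) : Fin n → ℝ :=
  (Mnorm M (Q *ᵥ y + q))⁻¹ • (Q *ᵥ y + q)

/-- The hemisphere S₊ = {x : ‖x‖_M = 1, qᵀMx > 0}. -/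
def Splus {n : ℕ} (M : Matrix (Fin n) (Fin n) ℝ) (q : Fin n → ℝ) : Set (Fin n → ℝ) :=
  {x | Mnorm M x = 1 ∧ 0 < q ⬝ᵥ (M *ᵥ x)}

/-- X = {x ∈ S₊ : Rq(x) ≤ Rq(q)}. -/
def Xset {n : ℕ} (A M : Matrix (Fin n) (Fin n) ℝ) (q : Fin n → ℝ) : Set (Fin n → ℝ) :=
  {x | x ∈ Splus M q ∧ Rq A M x ≤ Rq A M q}

/-- M-normalization v ↦ v/‖v‖_M. -/
noncomputable def Mnormalize {n : ℕ} (M : Matrix (Fin n) (Fin n) ℝ) (v : Fin n → ℝ) :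
    Fin n → ℝ :=
  (Mnorm M v)⁻¹ • v

/-!
Points of the hemisphere `S₊` are represented by their central projections onto the affine slice
`qᵀMv = 1`. Near the bottom of the spectrum all slice points in the sublevel set of `q` have
`M`-norm close to `1`, so the Rayleigh quotient on the slice is almost the quadratic function
`v ↦ λ₁ + vᵀ(A - λ₁M)v`, hence strongly convex and smooth with constants `μ_I` and `L_I`. In this
chart EIC is Nesterov's accelerated gradient method, whose Lyapunov function contracts by the factor
`1 - τ` in every step. The convexity estimates only hold on a sublevel set, so the same induction
shows that the extrapolated points never leave it: their distance to the minimizer is controlled by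
the Lyapunov function.
-/

open LinearMap (BilinForm)

namespace EIC

section PosSemidef

variable {V : Type*} [AddCommGroup V] [Module ℝ V] {m : BilinForm ℝ V}

theorem apply_sq_le (hm : m.IsPosSemidef) (x y : V) : m x y ^ 2 ≤ m x x * m y y :=
  m.apply_sq_le_of_symm hm.nonneg (LinearMap.BilinForm.isSymm_iff.mp hm.isSymm) x y

theorem one_le_apply_self (hm : m.IsPosSemidef) {q v : V} (hq : m q q = 1) (hv : m q v = 1) :
    1 ≤ m v v := by
  simpa [hq, hv] using apply_sq_le hm q v

theorem apply_sq_le_of_apply_eq_zero (hm : m.IsPosSemidef) {q v d : V} (hq : m q q = 1)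
    (hv : m q v = 1) (hd : m q d = 0) : m v d ^ 2 ≤ (m v v - 1) * m d d := by
  have hcs := apply_sq_le hm (v - q) d
  have hself : m (v - q) (v - q) = m v v - 1 := by
    simp only [map_sub, LinearMap.sub_apply, hm.isSymm.eq v q, hv, hq]
    ring
  rwa [hself, map_sub, LinearMap.sub_apply, hd, sub_zero] at hcs

-- Each of `x` and `y` makes an angle of sine at most `√s` with `u`, so the cosine of the angle
-- between them is at least `(1 - s) - s`.
theorem sq_one_sub_two_mul_mul_le_apply_sq (hm : m.IsPosSemidef) {u x y : V} {s : ℝ}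
    (hu : m u u = 1) (hs₀ : 0 ≤ s) (hs : 2 * s ≤ 1) (hx : m x x - m u x ^ 2 ≤ s * m x x)
    (hy : m y y - m u y ^ 2 ≤ s * m y y) :
    (1 - 2 * s) ^ 2 * (m x x * m y y) ≤ m x y ^ 2 := by
  have hxy : 0 ≤ m x x * m y y := mul_nonneg (hm.nonneg x) (hm.nonneg y)
  set R := √(m x x * m y y)
  have hR : R ^ 2 = m x x * m y y := Real.sq_sqrt hxy
  have hR₀ : 0 ≤ R := Real.sqrt_nonneg _
  have hperp : (m x y - m u x * m u y) ^ 2 ≤ (s * R) ^ 2 := by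
    have hproj (v w : V) : m (v - m u v • u) (w - m u w • u) = m v w - m u v * m u w := by
      simp only [map_sub, LinearMap.sub_apply, map_smul, LinearMap.smul_apply, smul_eq_mul, hu,
        hm.isSymm.eq v u]
      ring
    calc (m x y - m u x * m u y) ^ 2
        ≤ (m x x - m u x ^ 2) * (m y y - m u y ^ 2) := by
          simpa only [hproj, ← sq] using apply_sq_le hm (x - m u x • u) (y - m u y • u)
      _ ≤ (s * m x x) * (s * m y y) := by
          have := apply_sq_le hm u y
          rw [hu, one_mul] at this
          exact mul_le_mul hx hy (by linarith) (mul_nonneg hs₀ (hm.nonneg x))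
      _ = (s * R) ^ 2 := by rw [mul_pow, hR]; ring
  have hpar : ((1 - s) * R) ^ 2 ≤ (m u x * m u y) ^ 2 := by
    calc ((1 - s) * R) ^ 2 = ((1 - s) * m x x) * ((1 - s) * m y y) := by rw [mul_pow, hR]; ring
      _ ≤ m u x ^ 2 * m u y ^ 2 :=
          mul_le_mul (by linarith) (by linarith) (mul_nonneg (by linarith) (hm.nonneg y))
            (sq_nonneg _)
      _ = (m u x * m u y) ^ 2 := by ring
  have hperp' : |m x y - m u x * m u y| ≤ s * R := abs_le_of_sq_le_sq hperp (by positivity)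
  have hpar' : (1 - s) * R ≤ |m u x * m u y| := by
    have := sq_le_sq.mp hpar
    rwa [abs_of_nonneg (mul_nonneg (by linarith) hR₀)] at this
  rw [← hR, ← mul_pow, sq_le_sq, abs_of_nonneg (mul_nonneg (by linarith) hR₀)]
  linarith [abs_sub_abs_le_abs_sub (m u x * m u y) (m x y), abs_sub_comm (m u x * m u y) (m x y)]

end PosSemidef

/-! ### Rayleigh quotients on the slice -/

section Rayleigh

variable {V : Type*} [AddCommGroup V] [Module ℝ V] {a m : BilinForm ℝ V} {v w : V}

/-- The Rayleigh quotient of the pencil `(a, m)` of bilinear forms; it takes the junk value `0`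
where `m v v = 0`. -/
noncomputable def rayleigh (a m : BilinForm ℝ V) (v : V) : ℝ := a v v / m v v

/-- The derivative of the Rayleigh quotient of a symmetric pencil `(a, m)` at `v` in the
direction `d`. -/
noncomputable def rayleighDeriv (a m : BilinForm ℝ V) (v d : V) : ℝ :=
  2 * (a v d - rayleigh a m v * m v d) / m v v

theorem rayleigh_mul_apply_self (hv : m v v ≠ 0) : rayleigh a m v * m v v = a v v :=
  div_mul_cancel₀ _ hv

theorem rayleigh_smul {c : ℝ} (hc : c ≠ 0) (v : V) : rayleigh a m (c • v) = rayleigh a m v := by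
  simp only [rayleigh, map_smul, LinearMap.smul_apply, smul_eq_mul, mul_div_mul_left _ _ hc]

theorem rayleighDeriv_smul {c : ℝ} (hc : c ≠ 0) (v d : V) :
    rayleighDeriv a m (c • v) d = c⁻¹ * rayleighDeriv a m v d := by
  rw [rayleighDeriv, rayleighDeriv, rayleigh_smul hc]
  simp only [map_smul, LinearMap.smul_apply, smul_eq_mul]
  field_simp

theorem rayleigh_of_eigen {l : ℝ} (h : ∀ d, a v d = l * m v d) (hv : m v v ≠ 0) :
    rayleigh a m v = l := by
  rw [rayleigh, h, mul_div_cancel_right₀ _ hv]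

theorem rayleighDeriv_of_eigen {l : ℝ} (h : ∀ d, a v d = l * m v d) (hv : m v v ≠ 0) (d : V) :
    rayleighDeriv a m v d = 0 := by
  rw [rayleighDeriv, rayleigh_of_eigen h hv, h, sub_self, mul_zero, zero_div]

theorem apply_self_mul_rayleighDeriv (hv : m v v ≠ 0) (d : V) :
    m v v * rayleighDeriv a m v d = 2 * (a v d - rayleigh a m v * m v d) :=
  mul_div_cancel₀ _ hv

theorem apply_self_mul_rayleigh_taylor (ha : a.IsSymm) (hm : m.IsSymm) (hv : m v v ≠ 0)
    (hw : m w w ≠ 0) :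
    m w w * (rayleigh a m w - rayleigh a m v - rayleighDeriv a m v (w - v)) =
      a (w - v) (w - v) - rayleigh a m v * m (w - v) (w - v) -
        (m w w - m v v) * rayleighDeriv a m v (w - v) := by
  have hderiv := apply_self_mul_rayleighDeriv (a := a) hv (w - v)
  have hrv := rayleigh_mul_apply_self (a := a) hv
  have hrw := rayleigh_mul_apply_self (a := a) hw
  simp only [map_sub, LinearMap.sub_apply, ha.eq w v, hm.eq w v] at *
  linarith

end Rayleigh

/-- The vector `u` is an `m`-unit eigenvector of the pencil `(a, m)` for its smallest eigenvalue
`l`, and the rest of the spectrum lies above `l + gap`. The last field says so without mentioning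
the other eigenvectors: `m v v - m u v ^ 2` is the squared distance from `v` to the line of `u`. -/
structure HasSpectralGap {V : Type*} [AddCommGroup V] [Module ℝ V] (a m : BilinForm ℝ V) (u : V)
    (l gap : ℝ) : Prop where
  isSymm : a.IsSymm
  isPosSemidef : m.IsPosSemidef
  unit : m u u = 1
  eigen : ∀ v, a u v = l * m u v
  gap_pos : 0 < gap
  gap_mul_le : ∀ v, gap * (m v v - m u v ^ 2) ≤ a v v - l * m v v

namespace HasSpectralGap

variable {V : Type*} [AddCommGroup V] [Module ℝ V] {a m : BilinForm ℝ V} {u q v d : V}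
  {l gap δ : ℝ}

theorem mul_apply_self_le (h : HasSpectralGap a m u l gap) (v : V) : l * m v v ≤ a v v := by
  have hcs := apply_sq_le h.isPosSemidef u v
  rw [h.unit, one_mul] at hcs
  linarith [h.gap_mul_le v, mul_nonneg h.gap_pos.le (sub_nonneg.mpr hcs)]

theorem le_rayleigh (h : HasSpectralGap a m u l gap) (hv : 0 < m v v) : l ≤ rayleigh a m v :=
  (le_div_iff₀ hv).mpr (h.mul_apply_self_le v)

theorem isPosSemidef_sub_smul (h : HasSpectralGap a m u l gap) : (a - l • m).IsPosSemidef where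
  isSymm := h.isSymm.sub (h.isPosSemidef.isSymm.smul l)
  isNonneg := ⟨fun v ↦ by simpa using h.mul_apply_self_le v⟩

theorem apply_self_sub_sq_le (h : HasSpectralGap a m u l gap) (hv : 0 < m v v)
    (hδ : rayleigh a m v ≤ l + δ) : m v v - m u v ^ 2 ≤ δ / gap * m v v := by
  have hav : a v v ≤ (l + δ) * m v v := (div_le_iff₀ hv).mp hδ
  rw [div_mul_eq_mul_div, le_div_iff₀ h.gap_pos]
  linarith [h.gap_mul_le v]

-- The squared cosine between `u` and `d` is at most the squared sine between `u` and `q`.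
theorem add_gap_sub_mul_apply_self_le (h : HasSpectralGap a m u l gap) (hq : m q q = 1)
    (hδ : rayleigh a m q ≤ l + δ) (hd : m q d = 0) : (l + gap - δ) * m d d ≤ a d d := by
  have hm := h.isPosSemidef
  have hsin : gap * (1 - m u q ^ 2) ≤ δ := by
    have := h.apply_self_sub_sq_le (hq ▸ one_pos) hδ
    rwa [hq, mul_one, le_div_iff₀' h.gap_pos] at this
  have hcos : m u d ^ 2 ≤ (1 - m u q ^ 2) * m d d := by
    have hcs := apply_sq_le hm (u - m u q • q) d
    simp only [map_sub, LinearMap.sub_apply, map_smul, LinearMap.smul_apply, smul_eq_mul, h.unit,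
      hq, hd, hm.isSymm.eq q u] at hcs
    linarith
  have hgap_cos := mul_le_mul_of_nonneg_left hcos h.gap_pos.le
  have hsin_mul := mul_le_mul_of_nonneg_right hsin (hm.nonneg d)
  linarith [h.gap_mul_le d]

end HasSpectralGap

/-- The slice `m q v = 1` serves as a chart for the sublevel set `rayleigh a m v ≤ l + δ`, where
`q` itself lies in this set, `δ` is small compared to the spectral gap, and the quadratic form of
`a` is pinched between `ξmin` and `ξmax` on the directions `m q d = 0` of the chart. -/
structure SublevelChart {V : Type*} [AddCommGroup V] [Module ℝ V] (a m : BilinForm ℝ V) (u q : V)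
    (l gap δ ξmin ξmax : ℝ) : Prop extends HasSpectralGap a m u l gap where
  bottom_nonneg : 0 ≤ l
  center_unit : m q q = 1
  rayleigh_center_le : rayleigh a m q ≤ l + δ
  ten_mul_le : 10 * δ ≤ gap
  le_apply_self : ∀ d, m q d = 0 → ξmin * m d d ≤ a d d
  apply_self_le : ∀ d, m q d = 0 → a d d ≤ ξmax * m d d

namespace SublevelChart

variable {V : Type*} [AddCommGroup V] [Module ℝ V] {a m : BilinForm ℝ V} {u q v w d : V}
  {l gap δ ξmin ξmax : ℝ}

theorem delta_nonneg (h : SublevelChart a m u q l gap δ ξmin ξmax) : 0 ≤ δ := by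
  linarith [h.le_rayleigh (h.center_unit ▸ one_pos), h.rayleigh_center_le]

theorem apply_bottom_ne_zero (h : SublevelChart a m u q l gap δ ξmin ξmax) : m q u ≠ 0 := by
  intro hqu
  have hsin := h.apply_self_sub_sq_le (h.center_unit ▸ one_pos) h.rayleigh_center_le
  rw [h.center_unit, h.isPosSemidef.isSymm.eq, hqu, mul_one, le_div_iff₀ h.gap_pos] at hsin
  linarith [h.ten_mul_le, h.gap_pos]

theorem one_le_apply (h : SublevelChart a m u q l gap δ ξmin ξmax) (hv : m q v = 1) :
    1 ≤ m v v :=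
  one_le_apply_self h.isPosSemidef h.center_unit hv

theorem bottom_le_rayleigh (h : SublevelChart a m u q l gap δ ξmin ξmax) (hv : m q v = 1) :
    l ≤ rayleigh a m v :=
  h.le_rayleigh (one_pos.trans_le (h.one_le_apply hv))

theorem apply_self_mul_le_one (h : SublevelChart a m u q l gap δ ξmin ξmax) (hv : m q v = 1)
    (hfv : rayleigh a m v ≤ l + δ) : m v v * (1 - 4 * (δ / gap)) ≤ 1 := by
  have hpos : 0 < m v v := one_pos.trans_le (h.one_le_apply hv)
  have hs : δ / gap ≤ 1 / 10 := by
    rw [div_le_iff₀ h.gap_pos]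
    linarith [h.ten_mul_le]
  have hangle := sq_one_sub_two_mul_mul_le_apply_sq h.isPosSemidef h.unit
    (div_nonneg h.delta_nonneg h.gap_pos.le) (by linarith)
    (h.apply_self_sub_sq_le (h.center_unit ▸ one_pos) h.rayleigh_center_le)
    (h.apply_self_sub_sq_le hpos hfv)
  rw [h.center_unit, hv] at hangle
  have : 0 ≤ (δ / gap) ^ 2 * m v v := by positivity
  linarith

theorem gap_mul_apply_self_sub_one_le (h : SublevelChart a m u q l gap δ ξmin ξmax)
    (hv : m q v = 1) (hfv : rayleigh a m v ≤ l + δ) : gap * (m v v - 1) ≤ 20 / 3 * δ := by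
  have hgap := h.gap_pos
  have hle : m v v * (gap - 4 * δ) ≤ gap := by
    calc m v v * (gap - 4 * δ) = m v v * (1 - 4 * (δ / gap)) * gap := by field_simp
      _ ≤ gap := mul_le_of_le_one_left hgap.le (h.apply_self_mul_le_one hv hfv)
  have hD : m v v ≤ 5 / 3 := by
    refine le_of_mul_le_mul_right ?_ hgap
    linarith [mul_le_mul_of_nonneg_left h.ten_mul_le (h.isPosSemidef.nonneg v)]
  linarith [mul_le_mul_of_nonneg_right hD h.delta_nonneg]

theorem gap_mul_apply_self_sub_sq_le (h : SublevelChart a m u q l gap δ ξmin ξmax)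
    (hv : m q v = 1) (hw : m q w = 1) (hfv : rayleigh a m v ≤ l + δ)
    (hfw : rayleigh a m w ≤ l + δ) :
    gap * (m w w - m v v) ^ 2 ≤ 80 / 3 * δ * m (w - v) (w - v) := by
  have hm := h.isPosSemidef
  have hd : m q (w - v) = 0 := by rw [map_sub, hv, hw, sub_self]
  have hsub : m w w - m v v = m w (w - v) + m v (w - v) := by
    rw [map_sub, map_sub, hm.isSymm.eq w v]
    ring
  have hvd := apply_sq_le_of_apply_eq_zero hm h.center_unit hv hd
  have hwd := apply_sq_le_of_apply_eq_zero hm h.center_unit hw hd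
  set N := m (w - v) (w - v)
  have hN : 0 ≤ N := hm.nonneg _
  calc gap * (m w w - m v v) ^ 2
      ≤ gap * (2 * (m w (w - v) ^ 2 + m v (w - v) ^ 2)) := by
        rw [hsub]
        exact mul_le_mul_of_nonneg_left add_sq_le h.gap_pos.le
    _ ≤ gap * (2 * ((m w w - 1) * N + (m v v - 1) * N)) := by
        have := h.gap_pos
        gcongr
    _ = 2 * (gap * (m w w - 1) + gap * (m v v - 1)) * N := by ring
    _ ≤ 2 * (20 / 3 * δ + 20 / 3 * δ) * N := by
        gcongr ?_ * _
        linarith [h.gap_mul_apply_self_sub_one_le hw hfw, h.gap_mul_apply_self_sub_one_le hv hfv]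
    _ = 80 / 3 * δ * N := by ring

theorem delta_mul_apply_self_le (h : SublevelChart a m u q l gap δ ξmin ξmax) (hd : m q d = 0) :
    δ * m d d ≤ ξmax * m d d := by
  have hN := h.isPosSemidef.nonneg d
  calc δ * m d d ≤ (l + gap - δ) * m d d := by
        gcongr
        linarith [h.ten_mul_le, h.delta_nonneg, h.bottom_nonneg]
    _ ≤ a d d := h.add_gap_sub_mul_apply_self_le h.center_unit h.rayleigh_center_le hd
    _ ≤ ξmax * m d d := h.apply_self_le d hd

theorem rayleighDeriv_sq_le (h : SublevelChart a m u q l gap δ ξmin ξmax) (hv : m q v = 1)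
    (hfv : rayleigh a m v ≤ l + δ / 4) (hd : m q d = 0) :
    rayleighDeriv a m v d ^ 2 ≤ 9 / 4 * δ * (ξmax * m d d) := by
  have hD := h.one_le_apply hv
  have hD₀ : m v v ≠ 0 := by positivity
  have hδ := h.delta_nonneg
  have hN := h.isPosSemidef.nonneg d
  have : 0 ≤ ξmax * m d d := (mul_nonneg hδ hN).trans (h.delta_mul_apply_self_le hd)
  set e := rayleigh a m v - l
  have he₀ : 0 ≤ e := sub_nonneg.mpr (h.bottom_le_rayleigh hv)
  have he : e ≤ δ / 4 := by linarith
  have hX : (a v d - l * m v d) ^ 2 ≤ δ / 4 * m v v * (ξmax * m d d) := by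
    have hcs := apply_sq_le h.isPosSemidef_sub_smul v d
    simp only [LinearMap.sub_apply, LinearMap.smul_apply, smul_eq_mul] at hcs
    have hav : a v v - l * m v v = e * m v v := by
      rw [sub_mul, rayleigh_mul_apply_self hD₀]
    rw [hav] at hcs
    refine hcs.trans ?_
    gcongr
    · linarith [h.mul_apply_self_le d]
    · linarith [h.apply_self_le d hd, mul_nonneg h.bottom_nonneg hN]
  have hY : (e * m v d) ^ 2 ≤ δ / 16 * m v v * (ξmax * m d d) := by
    calc (e * m v d) ^ 2 = e ^ 2 * m v d ^ 2 := mul_pow _ _ _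
      _ ≤ (δ / 4) ^ 2 * (m v v * m d d) := by
          gcongr
          exact apply_sq_le h.isPosSemidef v d
      _ = δ / 16 * m v v * (δ * m d d) := by ring
      _ ≤ δ / 16 * m v v * (ξmax * m d d) := by
          gcongr ?_ * ?_
          exact h.delta_mul_apply_self_le hd
  have hderiv : m v v * rayleighDeriv a m v d = 2 * ((a v d - l * m v d) - e * m v d) := by
    rw [apply_self_mul_rayleighDeriv hD₀]
    ring
  have hsq : m v v * (m v v * rayleighDeriv a m v d ^ 2) ≤
      m v v * (9 / 4 * δ * (ξmax * m d d)) := by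
    have hsplit := sq_nonneg ((a v d - l * m v d) + 2 * (e * m v d))
    have : (m v v * rayleighDeriv a m v d) ^ 2 ≤ 9 / 4 * δ * (ξmax * m d d) * m v v := by
      rw [hderiv]
      linarith
    linarith
  exact (le_mul_of_one_le_left (sq_nonneg _) hD).trans (le_of_mul_le_mul_left hsq (by positivity))

theorem abs_apply_self_sub_mul_rayleighDeriv_le (h : SublevelChart a m u q l gap δ ξmin ξmax)
    {C : ℝ} (hC₀ : 0 ≤ C) (hC : 60 * δ ^ 2 * ξmax ≤ C ^ 2 * gap) (hv : m q v = 1)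
    (hw : m q w = 1) (hfv : rayleigh a m v ≤ l + δ / 4) (hfw : rayleigh a m w ≤ l + δ) :
    |(m w w - m v v) * rayleighDeriv a m v (w - v)| ≤ C * m (w - v) (w - v) := by
  have hδ := h.delta_nonneg
  have hd : m q (w - v) = 0 := by rw [map_sub, hv, hw, sub_self]
  have hnorm := h.gap_mul_apply_self_sub_sq_le hv hw (by linarith) hfw
  have hderiv := h.rayleighDeriv_sq_le hv hfv hd
  set N := m (w - v) (w - v)
  have hN : 0 ≤ N := h.isPosSemidef.nonneg _
  refine abs_le_of_sq_le_sq (le_of_mul_le_mul_left ?_ h.gap_pos) (by positivity)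
  calc gap * ((m w w - m v v) * rayleighDeriv a m v (w - v)) ^ 2
      = (gap * (m w w - m v v) ^ 2) * rayleighDeriv a m v (w - v) ^ 2 := by ring
    _ ≤ (80 / 3 * δ * N) * (9 / 4 * δ * (ξmax * N)) := by gcongr
    _ = 60 * δ ^ 2 * ξmax * N ^ 2 := by ring
    _ ≤ C ^ 2 * gap * N ^ 2 := by gcongr
    _ = gap * (C * N) ^ 2 := by ring

end SublevelChart

/-- On the slice `m q v = 1`, the function `f` with derivative `df` is `μ`-strongly convex and
`L`-smooth with respect to the seminorm of `m`, as long as the base point is in the sublevel set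
`f ≤ low` and the other point in `f ≤ high`. The last field controls `f` along descent directions
without assuming in advance that the other point is in `f ≤ high`. -/
structure RestrictedConvexity {V : Type*} [AddCommGroup V] [Module ℝ V] (m : BilinForm ℝ V) (q : V)
    (f : V → ℝ) (df : V → V → ℝ) (μ L low high : ℝ) : Prop where
  lower : ∀ v w, m q v = 1 → m q w = 1 → f v ≤ low → f w ≤ high →
    f v + df v (w - v) + μ / 2 * m (w - v) (w - v) ≤ f w
  upper : ∀ v w, m q v = 1 → m q w = 1 → f v ≤ low → f w ≤ high →
    f w ≤ f v + df v (w - v) + L / 2 * m (w - v) (w - v)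
  descent : ∀ v w, m q v = 1 → m q w = 1 → df v (w - v) ≤ 0 →
    f w ≤ f v + max 0 (df v (w - v) + L / 2 * m (w - v) (w - v))

namespace SublevelChart

variable {V : Type*} [AddCommGroup V] [Module ℝ V] {a m : BilinForm ℝ V} {u q v w : V}
  {l gap δ ξmin ξmax C μ L : ℝ}

theorem rayleigh_taylor_le (h : SublevelChart a m u q l gap δ ξmin ξmax) (hC₀ : 0 ≤ C)
    (hC : 60 * δ ^ 2 * ξmax ≤ C ^ 2 * gap) (hT : 0 ≤ ξmin - (l + δ) - C)
    (hμ : μ / 2 ≤ (1 - 4 * (δ / gap)) * (ξmin - (l + δ) - C)) (hv : m q v = 1)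
    (hw : m q w = 1) (hfv : rayleigh a m v ≤ l + δ / 4) (hfw : rayleigh a m w ≤ l + δ) :
    rayleigh a m v + rayleighDeriv a m v (w - v) + μ / 2 * m (w - v) (w - v) ≤
      rayleigh a m w := by
  have hvv : m v v ≠ 0 := (one_pos.trans_le (h.one_le_apply hv)).ne'
  have hww : 0 < m w w := one_pos.trans_le (h.one_le_apply hw)
  have htaylor := apply_self_mul_rayleigh_taylor h.isSymm h.isPosSemidef.isSymm hvv hww.ne'
  have hlower := h.le_apply_self (w - v) (by rw [map_sub, hv, hw, sub_self])
  have hcross := (abs_le.mp (h.abs_apply_self_sub_mul_rayleighDeriv_le hC₀ hC hv hw hfv hfw)).2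
  set N := m (w - v) (w - v)
  have hN : 0 ≤ N := h.isPosSemidef.nonneg _
  have hrem : m w w * (μ / 2 * N) ≤ m w w *
      (rayleigh a m w - rayleigh a m v - rayleighDeriv a m v (w - v)) := by
    calc m w w * (μ / 2 * N)
        ≤ m w w * ((1 - 4 * (δ / gap)) * (ξmin - (l + δ) - C) * N) := by gcongr
      _ = m w w * (1 - 4 * (δ / gap)) * ((ξmin - (l + δ) - C) * N) := by ring
      _ ≤ (ξmin - (l + δ) - C) * N :=
          mul_le_of_le_one_left (by positivity) (h.apply_self_mul_le_one hw hfw)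
      _ ≤ _ := by
          have : rayleigh a m v * N ≤ (l + δ) * N := by
            gcongr
            linarith [h.delta_nonneg]
          linarith
  linarith [le_of_mul_le_mul_left hrem hww]

theorem rayleigh_le_taylor (h : SublevelChart a m u q l gap δ ξmin ξmax) (hC₀ : 0 ≤ C)
    (hC : 60 * δ ^ 2 * ξmax ≤ C ^ 2 * gap) (hL₀ : 0 ≤ L) (hL : ξmax - l + C ≤ L / 2)
    (hv : m q v = 1) (hw : m q w = 1) (hfv : rayleigh a m v ≤ l + δ / 4)
    (hfw : rayleigh a m w ≤ l + δ) :
    rayleigh a m w ≤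
      rayleigh a m v + rayleighDeriv a m v (w - v) + L / 2 * m (w - v) (w - v) := by
  have hvv : m v v ≠ 0 := (one_pos.trans_le (h.one_le_apply hv)).ne'
  have hww : 1 ≤ m w w := h.one_le_apply hw
  have htaylor := apply_self_mul_rayleigh_taylor h.isSymm h.isPosSemidef.isSymm hvv
    (one_pos.trans_le hww).ne'
  have hupper := h.apply_self_le (w - v) (by rw [map_sub, hv, hw, sub_self])
  have hcross := (abs_le.mp (h.abs_apply_self_sub_mul_rayleighDeriv_le hC₀ hC hv hw hfv hfw)).1
  set N := m (w - v) (w - v)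
  have hN : 0 ≤ N := h.isPosSemidef.nonneg _
  have hrem : m w w * (rayleigh a m w - rayleigh a m v - rayleighDeriv a m v (w - v)) ≤
      m w w * (L / 2 * N) := by
    calc _ ≤ (ξmax - l + C) * N := by
          linarith [mul_le_mul_of_nonneg_right (h.bottom_le_rayleigh hv) hN]
      _ ≤ L / 2 * N := by gcongr
      _ ≤ m w w * (L / 2 * N) := le_mul_of_one_le_left (by positivity) hww
  linarith [le_of_mul_le_mul_left hrem (by linarith)]

theorem rayleigh_le_add_max (h : SublevelChart a m u q l gap δ ξmin ξmax)
    (hL : ξmax - l ≤ L / 2) (hv : m q v = 1) (hw : m q w = 1)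
    (hdesc : rayleighDeriv a m v (w - v) ≤ 0) :
    rayleigh a m w ≤ rayleigh a m v +
      max 0 (rayleighDeriv a m v (w - v) + L / 2 * m (w - v) (w - v)) := by
  have hvv : 1 ≤ m v v := h.one_le_apply hv
  have hww : 1 ≤ m w w := h.one_le_apply hw
  have htaylor := apply_self_mul_rayleigh_taylor h.isSymm h.isPosSemidef.isSymm
    (one_pos.trans_le hvv).ne' (one_pos.trans_le hww).ne'
  have hupper := h.apply_self_le (w - v) (by rw [map_sub, hv, hw, sub_self])
  set N := m (w - v) (w - v)
  have hN : 0 ≤ N := h.isPosSemidef.nonneg _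
  set t := rayleighDeriv a m v (w - v)
  have hrem : m w w * (rayleigh a m w - rayleigh a m v) ≤ m w w * max 0 (t + L / 2 * N) := by
    calc m w w * (rayleigh a m w - rayleigh a m v) ≤ m v v * t + (ξmax - l) * N := by
          linarith [mul_le_mul_of_nonneg_right (h.bottom_le_rayleigh hv) hN]
      _ ≤ t + L / 2 * N := by
          gcongr
          nlinarith
      _ ≤ max 0 (t + L / 2 * N) := le_max_right _ _
      _ ≤ m w w * max 0 (t + L / 2 * N) := le_mul_of_one_le_left (le_max_left _ _) hww
  linarith [le_of_mul_le_mul_left hrem (by linarith)]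

theorem restrictedConvexity_rayleigh (h : SublevelChart a m u q l gap δ ξmin ξmax) (hC₀ : 0 ≤ C)
    (hC : 60 * δ ^ 2 * ξmax ≤ C ^ 2 * gap) (hT : 0 ≤ ξmin - (l + δ) - C)
    (hμ : μ / 2 ≤ (1 - 4 * (δ / gap)) * (ξmin - (l + δ) - C)) (hL₀ : 0 ≤ L)
    (hL : ξmax - l + C ≤ L / 2) :
    RestrictedConvexity m q (rayleigh a m) (rayleighDeriv a m) μ L (l + δ / 4) (l + δ) where
  lower _ _ hv hw hfv hfw := h.rayleigh_taylor_le hC₀ hC hT hμ hv hw hfv hfw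
  upper _ _ hv hw hfv hfw := h.rayleigh_le_taylor hC₀ hC hL₀ hL hv hw hfv hfw
  descent _ _ hv hw hdesc := h.rayleigh_le_add_max (by linarith) hv hw hdesc

end SublevelChart

/-! ### Accelerated gradient descent on a slice -/

/-- The iterates of an accelerated gradient method for `f` on the slice `m q v = 1`: the
extrapolated points `pb`, the gradients `G` at these points, the estimate sequence `w`, and primal
iterates `p` that do at least as well as a gradient step of length `1 / L` from `pb`, as long as
this step stays in the sublevel set `f ≤ high`. -/
structure AcceleratedRun {V : Type*} [AddCommGroup V] [Module ℝ V] (m : BilinForm ℝ V) (q : V)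
    (f : V → ℝ) (df : V → V → ℝ) (τ μ L high : ℝ) (p w pb G : ℕ → V) : Prop where
  modulus_pos : 0 < μ
  smoothness_pos : 0 < L
  step_nonneg : 0 ≤ τ
  step_le_one : τ ≤ 1
  step_sq_mul_le : τ ^ 2 * L ≤ μ
  estimate_zero : w 0 = p 0
  apply_primal : ∀ k, m q (p k) = 1
  primal_le : ∀ k, f (p k) ≤ high
  extrapolate : ∀ k, (1 + τ) • pb k = p k + τ • w k
  apply_grad : ∀ k, m q (G k) = 0
  grad_apply : ∀ k d, m q d = 0 → m (G k) d = df (pb k) d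
  estimate_succ : ∀ k, w (k + 1) = (1 - τ) • w k + τ • pb k - (τ / μ) • G k
  primal_succ_le : ∀ k, f (pb k - L⁻¹ • G k) ≤ high → f (p (k + 1)) ≤ f (pb k - L⁻¹ • G k)

/-- The Lyapunov function of accelerated gradient descent: the gap in the objective between `p`
and the minimizer `s`, plus the weighted squared distance from the estimate `w` to `s`. -/
noncomputable def lyapunov {V : Type*} [AddCommGroup V] [Module ℝ V] (m : BilinForm ℝ V)
    (f : V → ℝ) (μ : ℝ) (s p w : V) : ℝ :=
  f p - f s + μ / 2 * m (w - s) (w - s)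

section AcceleratedGradient

variable {V : Type*} [AddCommGroup V] [Module ℝ V] {m : BilinForm ℝ V} {q s : V} {f : V → ℝ}
  {df : V → V → ℝ} {τ μ L low high : ℝ}

theorem apply_self_extrapolate_le (hm : m.IsPosSemidef) (hτ : 0 ≤ τ) {p w pb : V}
    (hpb : (1 + τ) • pb = p + τ • w) (s : V) :
    (1 + τ) * m (pb - s) (pb - s) ≤ m (p - s) (p - s) + τ * m (w - s) (w - s) := by
  have hp : p = (1 + τ) • pb - τ • w := by rw [hpb, add_sub_cancel_right]
  have hdiff : m (p - s) (p - s) + τ * m (w - s) (w - s) =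
      (1 + τ) * m (pb - s) (pb - s) + (τ + τ ^ 2) * m (w - pb) (w - pb) := by
    rw [hp]
    simp only [map_sub, LinearMap.sub_apply, map_smul, LinearMap.smul_apply, smul_eq_mul,
      hm.isSymm.eq s, hm.isSymm.eq w pb]
    ring
  have := hm.nonneg (w - pb)
  rw [hdiff]
  exact le_add_of_nonneg_right (by positivity)

-- The extrapolation says `τ • (w - pb) = pb - p`, which trades the inner product of the gradient
-- with `w - pb` for one with `p - pb`.
theorem apply_self_estimate_le (hm : m.IsPosSemidef) (hμ : 0 < μ) (hτ₀ : 0 ≤ τ) (hτ₁ : τ ≤ 1)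
    {p w pb g : V} (hpb : (1 + τ) • pb = p + τ • w) (s : V) :
    μ / 2 * m ((1 - τ) • w + τ • pb - (τ / μ) • g - s) ((1 - τ) • w + τ • pb - (τ / μ) • g - s) ≤
      (1 - τ) * (μ / 2 * m (w - s) (w - s)) + τ * (μ / 2 * m (s - pb) (s - pb)) +
        (τ * m g (s - pb) + (1 - τ) * m g (p - pb)) + τ ^ 2 / (2 * μ) * m g g := by
  have hp : p = (1 + τ) • pb - τ • w := by rw [hpb, add_sub_cancel_right]
  have hspread : 0 ≤ μ / 2 * (τ * (1 - τ)) * m (w - pb) (w - pb) := by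
    have := hm.nonneg (w - pb)
    have := sub_nonneg.mpr hτ₁
    positivity
  rw [hp, ← sub_nonneg]
  refine hspread.trans (le_of_eq ?_)
  simp only [map_add, LinearMap.add_apply, map_sub, LinearMap.sub_apply, map_smul,
    LinearMap.smul_apply, smul_eq_mul, hm.isSymm.eq s, hm.isSymm.eq w pb, hm.isSymm.eq w g,
    hm.isSymm.eq pb g]
  field_simp
  ring

theorem RestrictedConvexity.gradient_step_le (hf : RestrictedConvexity m q f df μ L low high)
    (hm : m.IsPosSemidef) (hL : 0 < L) (hle : low ≤ high) {v g : V} (hv : m q v = 1)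
    (hfv : f v ≤ low) (hqg : m q g = 0) (hg : ∀ d, m q d = 0 → m g d = df v d) :
    f (v - L⁻¹ • g) ≤ f v - m g g / (2 * L) := by
  have hgg := hm.nonneg g
  have hsub : v - L⁻¹ • g - v = -(L⁻¹ • g) := by abel
  have hslice : m q (v - L⁻¹ • g) = 1 := by
    rw [map_sub, map_smul, hqg, smul_zero, sub_zero, hv]
  have hderiv : df v (v - L⁻¹ • g - v) = -(m g g / L) := by
    rw [← hg _ (by rw [map_sub, hslice, hv, sub_self]), hsub, map_neg, map_smul, smul_eq_mul]
    ring
  have hquad : df v (v - L⁻¹ • g - v) + L / 2 * m (v - L⁻¹ • g - v) (v - L⁻¹ • g - v) =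
      -(m g g / (2 * L)) := by
    rw [hderiv, hsub]
    simp only [map_neg, LinearMap.neg_apply, map_smul, LinearMap.smul_apply, smul_eq_mul]
    field_simp
    ring
  have hdescent := hf.descent v _ hv hslice (hderiv.trans_le (neg_nonpos.mpr (by positivity)))
  rw [hquad, max_eq_left (neg_nonpos.mpr (by positivity)), add_zero] at hdescent
  linarith [hf.upper v _ hv hslice hfv (hdescent.trans (hfv.trans hle))]

theorem RestrictedConvexity.sub_le_of_critical (hf : RestrictedConvexity m q f df μ L low high)
    (hm : m.IsPosSemidef) (hL : 0 ≤ L) (hs : m q s = 1) (hds : ∀ d, m q d = 0 → df s d = 0)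
    {v : V} (hv : m q v = 1) : f v - f s ≤ L / 2 * m (v - s) (v - s) := by
  have hcrit : df s (v - s) = 0 := hds _ (by rw [map_sub, hv, hs, sub_self])
  have hdescent := hf.descent s v hs hv hcrit.le
  have := hm.nonneg (v - s)
  rw [hcrit, zero_add, max_eq_right (by positivity)] at hdescent
  linarith

theorem RestrictedConvexity.le_sub_of_critical (hf : RestrictedConvexity m q f df μ L low high)
    (hs : m q s = 1) (hds : ∀ d, m q d = 0 → df s d = 0) (hfs : f s ≤ low) {v : V}
    (hv : m q v = 1) (hfv : f v ≤ high) : μ / 2 * m (v - s) (v - s) ≤ f v - f s := by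
  have hlower := hf.lower s v hs hv hfs hfv
  rw [hds _ (by rw [map_sub, hv, hs, sub_self])] at hlower
  linarith

namespace AcceleratedRun

variable {p w pb G : ℕ → V}

theorem apply_extrapolate (r : AcceleratedRun m q f df τ μ L high p w pb G) {k : ℕ}
    (hw : m q (w k) = 1) : m q (pb k) = 1 := by
  have hext := congrArg (m q) (r.extrapolate k)
  simp only [map_add, map_smul, smul_eq_mul, r.apply_primal, hw, mul_one] at hext
  exact (mul_eq_left₀ (by linarith [r.step_nonneg])).mp hext

theorem apply_estimate (r : AcceleratedRun m q f df τ μ L high p w pb G) (k : ℕ) :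
    m q (w k) = 1 := by
  induction k with
  | zero => rw [r.estimate_zero, r.apply_primal]
  | succ k ih =>
    rw [r.estimate_succ]
    simp only [map_add, map_sub, map_smul, smul_eq_mul, ih, r.apply_extrapolate ih, r.apply_grad]
    ring

theorem lyapunov_succ_le (r : AcceleratedRun m q f df τ μ L high p w pb G)
    (hf : RestrictedConvexity m q f df μ L low high) (hm : m.IsPosSemidef) (hle : low ≤ high)
    (hs : m q s = 1) (hfs : f s ≤ low) {k : ℕ} (hfpb : f (pb k) ≤ low) :
    lyapunov m f μ s (p (k + 1)) (w (k + 1)) ≤ (1 - τ) * lyapunov m f μ s (p k) (w k) := by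
  have hμ := r.modulus_pos
  have hL := r.smoothness_pos
  have hτ₀ := r.step_nonneg
  have hτ₁ := sub_nonneg.mpr r.step_le_one
  have hpb := r.apply_extrapolate (r.apply_estimate k)
  have hgrad {v : V} (hv : m q v = 1) : df (pb k) (v - pb k) = m (G k) (v - pb k) :=
    (r.grad_apply k _ (by rw [map_sub, hv, hpb, sub_self])).symm
  have hlower_s := hf.lower (pb k) s hpb hs hfpb (hfs.trans hle)
  have hlower_p : f (pb k) + m (G k) (p k - pb k) ≤ f (p k) := by
    have hlower := hf.lower (pb k) (p k) hpb (r.apply_primal k) hfpb (r.primal_le k)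
    rw [hgrad (r.apply_primal k)] at hlower
    have := hm.nonneg (p k - pb k)
    have : 0 ≤ μ / 2 * m (p k - pb k) (p k - pb k) := by positivity
    linarith
  rw [hgrad hs] at hlower_s
  have hgg := hm.nonneg (G k)
  have hprimal : f (p (k + 1)) ≤ f (pb k) - m (G k) (G k) / (2 * L) := by
    have hstep := hf.gradient_step_le hm hL hle hpb hfpb (r.apply_grad k) (r.grad_apply k)
    have : 0 ≤ m (G k) (G k) / (2 * L) := by positivity
    exact (r.primal_succ_le k (by linarith)).trans hstep
  have hgain : τ ^ 2 / (2 * μ) * m (G k) (G k) ≤ m (G k) (G k) / (2 * L) := by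
    rw [div_mul_eq_mul_div, div_le_div_iff₀ (by positivity) (by positivity)]
    linarith [mul_le_mul_of_nonneg_right r.step_sq_mul_le hgg]
  have hestimate := apply_self_estimate_le hm hμ hτ₀ r.step_le_one (g := G k) (r.extrapolate k) s
  simp only [lyapunov, r.estimate_succ]
  linarith [mul_le_mul_of_nonneg_left hlower_s hτ₀, mul_le_mul_of_nonneg_left hlower_p hτ₁]

theorem apply_extrapolate_le (r : AcceleratedRun m q f df τ μ L high p w pb G)
    (hf : RestrictedConvexity m q f df μ L low high) (hm : m.IsPosSemidef)
    (hs : m q s = 1) (hds : ∀ d, m q d = 0 → df s d = 0) (hfs : f s ≤ low) {k : ℕ}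
    (hlyap : L * lyapunov m f μ s (p k) (w k) ≤ μ * (low - f s)) : f (pb k) ≤ low := by
  have hμ := r.modulus_pos
  have hL := r.smoothness_pos
  have hτ₀ := r.step_nonneg
  have hNb := hm.nonneg (pb k - s)
  have hNw := hm.nonneg (w k - s)
  have hprimal := hf.le_sub_of_critical hs hds hfs (r.apply_primal k) (r.primal_le k)
  have hupper := hf.sub_le_of_critical hm hL.le hs hds
    (r.apply_extrapolate (r.apply_estimate k))
  have hdist : μ / 2 * m (pb k - s) (pb k - s) ≤ lyapunov m f μ s (p k) (w k) := by
    calc μ / 2 * m (pb k - s) (pb k - s)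
        ≤ μ / 2 * ((1 + τ) * m (pb k - s) (pb k - s)) := by
          gcongr
          exact le_mul_of_one_le_left hNb (by linarith)
      _ ≤ μ / 2 * (m (p k - s) (p k - s) + τ * m (w k - s) (w k - s)) := by
          gcongr
          exact apply_self_extrapolate_le hm hτ₀ (r.extrapolate k) s
      _ ≤ μ / 2 * (m (p k - s) (p k - s) + m (w k - s) (w k - s)) := by
          gcongr
          exact mul_le_of_le_one_left hNw r.step_le_one
      _ ≤ lyapunov m f μ s (p k) (w k) := by
          rw [lyapunov]
          linarith
  have hscaled : μ * (f (pb k) - f s) ≤ μ * (low - f s) := by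
    calc μ * (f (pb k) - f s) ≤ μ * (L / 2 * m (pb k - s) (pb k - s)) := by gcongr
      _ = L * (μ / 2 * m (pb k - s) (pb k - s)) := by ring
      _ ≤ L * lyapunov m f μ s (p k) (w k) := by gcongr
      _ ≤ μ * (low - f s) := hlyap
  linarith [le_of_mul_le_mul_left hscaled hμ]

theorem lyapunov_le (r : AcceleratedRun m q f df τ μ L high p w pb G)
    (hf : RestrictedConvexity m q f df μ L low high) (hm : m.IsPosSemidef) (hle : low ≤ high)
    (hs : m q s = 1) (hds : ∀ d, m q d = 0 → df s d = 0) (hfs : f s ≤ low)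
    (hinit : 2 * L * (f (p 0) - f s) ≤ μ * (low - f s)) (k : ℕ) :
    lyapunov m f μ s (p k) (w k) ≤ 2 * (1 - τ) ^ k * (f (p 0) - f s) := by
  have hμ := r.modulus_pos
  have hL := r.smoothness_pos
  have hτ₁ := sub_nonneg.mpr r.step_le_one
  have hstart := hf.le_sub_of_critical hs hds hfs (r.apply_primal 0) (r.primal_le 0)
  induction k with
  | zero =>
    rw [lyapunov, r.estimate_zero]
    linarith
  | succ k ih =>
    have hgap : 0 ≤ f (p 0) - f s := by
      have := hm.nonneg (p 0 - s)
      exact le_trans (by positivity) hstart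
    have hpow : (1 - τ) ^ k ≤ 1 := pow_le_one₀ hτ₁ (by linarith [r.step_nonneg])
    have hfpb : f (pb k) ≤ low := by
      refine r.apply_extrapolate_le hf hm hs hds hfs (le_trans ?_ hinit)
      rw [mul_comm 2 L, mul_assoc]
      gcongr
      exact ih.trans (by gcongr; linarith)
    calc _ ≤ (1 - τ) * lyapunov m f μ s (p k) (w k) := r.lyapunov_succ_le hf hm hle hs hfs hfpb
      _ ≤ (1 - τ) * (2 * (1 - τ) ^ k * (f (p 0) - f s)) := by gcongr
      _ = 2 * (1 - τ) ^ (k + 1) * (f (p 0) - f s) := by ring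

theorem sub_le_pow_mul (r : AcceleratedRun m q f df τ μ L high p w pb G)
    (hf : RestrictedConvexity m q f df μ L low high) (hm : m.IsPosSemidef) (hle : low ≤ high)
    (hs : m q s = 1) (hds : ∀ d, m q d = 0 → df s d = 0) (hfs : f s ≤ low)
    (hinit : 2 * L * (f (p 0) - f s) ≤ μ * (low - f s)) (k : ℕ) :
    f (p k) - f s ≤ 2 * (1 - τ) ^ k * (f (p 0) - f s) := by
  refine le_trans ?_ (r.lyapunov_le hf hm hle hs hds hfs hinit k)
  have := hm.nonneg (w k - s)
  have := r.modulus_pos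
  exact le_add_of_nonneg_right (by positivity)

end AcceleratedRun

end AcceleratedGradient

/-! ### Constants of the convexity theorem -/

/-- The constant `χ_I` of the convexity theorem, for the two smallest eigenvalues `l₁`, `l₂` of the
pencil and the extreme eigenvalues `ξmin`, `ξmax` of the reduced matrix. -/
noncomputable def chiI (l₁ l₂ ξmin ξmax : ℝ) : ℝ :=
  (8 * l₂ / l₁) * (ξmax / ξmin) * √((l₂ + l₁) / (2 * (l₂ - l₁)))

/-- The modulus of strong convexity `μ_I`, where `δ` stands for `ρ_q - λ₁`. -/
noncomputable def muI (l₁ l₂ ξmin χ δ : ℝ) : ℝ :=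
  2 * ξmin * (1 - 4 * δ / (l₂ - l₁)) * (1 - l₁ / l₂ - (2 + χ) * δ / l₂)

/-- The modulus of smoothness `L_I`, where `δ` stands for `ρ_q - λ₁` and `lₙ` is the largest
eigenvalue of the pencil. -/
noncomputable def LI (l₁ l₂ lₙ ξmin ξmax χ δ : ℝ) : ℝ :=
  2 * ξmax * (1 - l₁ / lₙ + (χ / l₂) * (ξmin / ξmax) * δ)

/-- The constants of the convexity theorem are in their admissible range: `δ = ρ_q - λ₁` is small
and the extreme eigenvalues `ξmin`, `ξmax` of the reduced matrix interlace those of the pencil. -/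
structure AdmissibleConstants (l₁ l₂ lₙ ξmin ξmax χ δ : ℝ) : Prop where
  bottom_pos : 0 < l₁
  bottom_lt_second : l₁ < l₂
  bottom_le_min : l₁ ≤ ξmin
  second_sub_le_min : l₂ - δ ≤ ξmin
  min_le_max : ξmin ≤ ξmax
  max_le_top : ξmax ≤ lₙ
  chi_eq : χ = chiI l₁ l₂ ξmin ξmax
  delta_nonneg : 0 ≤ δ
  delta_le : δ ≤ (l₂ - l₁) / (2 + χ)

namespace AdmissibleConstants

variable {l₁ l₂ lₙ ξmin ξmax χ δ : ℝ}

theorem second_pos (c : AdmissibleConstants l₁ l₂ lₙ ξmin ξmax χ δ) : 0 < l₂ :=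
  c.bottom_pos.trans c.bottom_lt_second

theorem min_pos (c : AdmissibleConstants l₁ l₂ lₙ ξmin ξmax χ δ) : 0 < ξmin :=
  c.bottom_pos.trans_le c.bottom_le_min

theorem max_pos (c : AdmissibleConstants l₁ l₂ lₙ ξmin ξmax χ δ) : 0 < ξmax :=
  c.min_pos.trans_le c.min_le_max

theorem gap_pos (c : AdmissibleConstants l₁ l₂ lₙ ξmin ξmax χ δ) : 0 < l₂ - l₁ :=
  sub_pos.mpr c.bottom_lt_second

theorem eight_le_chi (c : AdmissibleConstants l₁ l₂ lₙ ξmin ξmax χ δ) : 8 ≤ χ := by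
  have hl₁ := c.bottom_pos
  have hl₂ := c.second_pos
  have hgap := c.gap_pos
  have hratio : 1 ≤ ξmax / ξmin := (one_le_div c.min_pos).mpr c.min_le_max
  have hsqrt : l₁ / l₂ ≤ √((l₂ + l₁) / (2 * (l₂ - l₁))) := by
    apply Real.le_sqrt_of_sq_le
    calc (l₁ / l₂) ^ 2 ≤ l₁ / l₂ := by
          refine pow_le_of_le_one (by positivity) ?_ two_ne_zero
          exact (div_le_one hl₂).mpr c.bottom_lt_second.le
      _ ≤ (l₂ + l₁) / (2 * (l₂ - l₁)) := by
          rw [div_le_div_iff₀ hl₂ (by positivity)]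
          linarith [sq_nonneg (l₁ - l₂), mul_pos hl₁ hl₂, sq_nonneg l₁]
  calc 8 = 8 * l₂ / l₁ * 1 * (l₁ / l₂) := by field_simp
    _ ≤ 8 * l₂ / l₁ * (ξmax / ξmin) * √((l₂ + l₁) / (2 * (l₂ - l₁))) := by gcongr
    _ = χ := c.chi_eq.symm

theorem two_add_chi_mul_delta_le (c : AdmissibleConstants l₁ l₂ lₙ ξmin ξmax χ δ) :
    (2 + χ) * δ ≤ l₂ - l₁ :=
  (le_div_iff₀' (by linarith [c.eight_le_chi])).mp c.delta_le

theorem ten_mul_delta_le (c : AdmissibleConstants l₁ l₂ lₙ ξmin ξmax χ δ) :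
    10 * δ ≤ l₂ - l₁ := by
  linarith [c.two_add_chi_mul_delta_le, mul_le_mul_of_nonneg_right c.eight_le_chi c.delta_nonneg]

theorem cross_nonneg (c : AdmissibleConstants l₁ l₂ lₙ ξmin ξmax χ δ) :
    0 ≤ ξmin * χ * δ / l₂ := by
  have := c.eight_le_chi
  have := c.delta_nonneg
  have := c.min_pos
  have := c.second_pos
  positivity

theorem sixty_mul_le_cross_sq_mul (c : AdmissibleConstants l₁ l₂ lₙ ξmin ξmax χ δ) :
    60 * δ ^ 2 * ξmax ≤ (ξmin * χ * δ / l₂) ^ 2 * (l₂ - l₁) := by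
  have hl₁ := c.bottom_pos
  have hl₂ := c.second_pos
  have hgap := c.gap_pos
  have hξmin := c.min_pos
  have hξmax := c.max_pos
  have hratio : 1 ≤ ξmax * (l₂ + l₁) / (2 * l₁ ^ 2) := by
    rw [one_le_div (by positivity)]
    calc 2 * l₁ ^ 2 = l₁ * (l₁ + l₁) := by ring
      _ ≤ ξmax * (l₂ + l₁) := by
          gcongr
          exacts [c.bottom_le_min.trans c.min_le_max, c.bottom_lt_second.le]
  calc 60 * δ ^ 2 * ξmax ≤ 64 * δ ^ 2 * ξmax := by gcongr; norm_num
    _ ≤ 64 * δ ^ 2 * ξmax * (ξmax * (l₂ + l₁) / (2 * l₁ ^ 2)) :=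
        le_mul_of_one_le_right (by positivity) hratio
    _ = (8 * δ * (ξmax / l₁)) ^ 2 * ((l₂ + l₁) / (2 * (l₂ - l₁))) * (l₂ - l₁) := by
        field_simp
        ring
    _ = (ξmin * χ * δ / l₂) ^ 2 * (l₂ - l₁) := by
        rw [← Real.sq_sqrt (show 0 ≤ (l₂ + l₁) / (2 * (l₂ - l₁)) by positivity), c.chi_eq, chiI]
        field_simp

theorem min_mul_nonneg (c : AdmissibleConstants l₁ l₂ lₙ ξmin ξmax χ δ) :
    0 ≤ ξmin * (1 - l₁ / l₂ - (2 + χ) * δ / l₂) := by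
  have hl₂ := c.second_pos
  have hfactor : 1 - l₁ / l₂ - (2 + χ) * δ / l₂ = (l₂ - l₁ - (2 + χ) * δ) / l₂ := by field_simp
  rw [hfactor]
  exact mul_nonneg c.min_pos.le
    (div_nonneg (sub_nonneg.mpr c.two_add_chi_mul_delta_le) hl₂.le)

theorem min_mul_le (c : AdmissibleConstants l₁ l₂ lₙ ξmin ξmax χ δ) :
    ξmin * (1 - l₁ / l₂ - (2 + χ) * δ / l₂) ≤ ξmin - (l₁ + δ) - ξmin * χ * δ / l₂ := by
  have hl₂ := c.second_pos
  have hδ := c.delta_nonneg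
  have hshift : l₁ + δ ≤ ξmin * (l₁ + 2 * δ) / l₂ := by
    rw [le_div_iff₀ hl₂]
    calc (l₁ + δ) * l₂ ≤ (l₂ - δ) * (l₁ + 2 * δ) := by
          linarith [mul_le_mul_of_nonneg_right c.ten_mul_delta_le hδ, sq_nonneg δ]
      _ ≤ ξmin * (l₁ + 2 * δ) := by
          have := c.bottom_pos
          have := c.second_sub_le_min
          gcongr
  calc ξmin * (1 - l₁ / l₂ - (2 + χ) * δ / l₂)
      = ξmin - ξmin * (l₁ + 2 * δ) / l₂ - ξmin * χ * δ / l₂ := by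
        field_simp
        ring
    _ ≤ ξmin - (l₁ + δ) - ξmin * χ * δ / l₂ := by gcongr

theorem four_mul_delta_div_le_one (c : AdmissibleConstants l₁ l₂ lₙ ξmin ξmax χ δ) :
    4 * (δ / (l₂ - l₁)) ≤ 1 := by
  rw [← mul_div_assoc, div_le_one c.gap_pos]
  linarith [c.ten_mul_delta_le, c.delta_nonneg]

theorem muI_div_two_eq : muI l₁ l₂ ξmin χ δ / 2 =
    (1 - 4 * (δ / (l₂ - l₁))) * (ξmin * (1 - l₁ / l₂ - (2 + χ) * δ / l₂)) := by
  rw [muI]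
  ring

theorem muI_div_two_le (c : AdmissibleConstants l₁ l₂ lₙ ξmin ξmax χ δ) :
    muI l₁ l₂ ξmin χ δ / 2 ≤
      (1 - 4 * (δ / (l₂ - l₁))) * (ξmin - (l₁ + δ) - ξmin * χ * δ / l₂) := by
  rw [muI_div_two_eq]
  exact mul_le_mul_of_nonneg_left c.min_mul_le (sub_nonneg.mpr c.four_mul_delta_div_le_one)

theorem le_LI_div_two (c : AdmissibleConstants l₁ l₂ lₙ ξmin ξmax χ δ) :
    ξmax - l₁ + ξmin * χ * δ / l₂ ≤ LI l₁ l₂ lₙ ξmin ξmax χ δ / 2 := by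
  have hξmax := c.max_pos
  have hratio : ξmax / lₙ ≤ 1 := (div_le_one (hξmax.trans_le c.max_le_top)).mpr c.max_le_top
  calc ξmax - l₁ + ξmin * χ * δ / l₂ ≤ ξmax - l₁ * (ξmax / lₙ) + ξmin * χ * δ / l₂ := by
        gcongr
        exact mul_le_of_le_one_right c.bottom_pos.le hratio
    _ = LI l₁ l₂ lₙ ξmin ξmax χ δ / 2 := by
        rw [LI]
        field_simp

theorem muI_le_LI (c : AdmissibleConstants l₁ l₂ lₙ ξmin ξmax χ δ) :
    muI l₁ l₂ ξmin χ δ ≤ LI l₁ l₂ lₙ ξmin ξmax χ δ := by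
  have hfactor : 1 - 4 * (δ / (l₂ - l₁)) ≤ 1 :=
    sub_le_self _ (mul_nonneg zero_le_four (div_nonneg c.delta_nonneg c.gap_pos.le))
  have hhalf : muI l₁ l₂ ξmin χ δ / 2 ≤ ξmin * (1 - l₁ / l₂ - (2 + χ) * δ / l₂) := by
    rw [muI_div_two_eq]
    exact mul_le_of_le_one_left c.min_mul_nonneg hfactor
  linarith [c.min_mul_le, c.le_LI_div_two, c.cross_nonneg, c.min_le_max, c.delta_nonneg]

theorem restrictedConvexity {V : Type*} [AddCommGroup V] [Module ℝ V] {a m : BilinForm ℝ V}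
    {u q : V} (c : AdmissibleConstants l₁ l₂ lₙ ξmin ξmax χ δ)
    (h : SublevelChart a m u q l₁ (l₂ - l₁) δ ξmin ξmax) :
    RestrictedConvexity m q (rayleigh a m) (rayleighDeriv a m) (muI l₁ l₂ ξmin χ δ)
      (LI l₁ l₂ lₙ ξmin ξmax χ δ) (l₁ + δ / 4) (l₁ + δ) :=
  have hL : 0 ≤ LI l₁ l₂ lₙ ξmin ξmax χ δ := by
    linarith [c.le_LI_div_two, c.cross_nonneg, c.bottom_le_min, c.min_le_max]
  h.restrictedConvexity_rayleigh c.cross_nonneg c.sixty_mul_le_cross_sq_mul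
    (c.min_mul_nonneg.trans c.min_mul_le) c.muI_div_two_le hL c.le_LI_div_two

end AdmissibleConstants

/-! ### Eigenbases and the reduced matrix -/

/-- The vectors `u i` form an `m`-orthonormal basis of eigenvectors of the pencil `(a, m)`, with
eigenvalues `lam i`. -/
structure IsEigenbasis {ι V : Type*} [Fintype ι] [DecidableEq ι] [AddCommGroup V] [Module ℝ V]
    (a m : BilinForm ℝ V) (lam : ι → ℝ) (u : ι → V) : Prop where
  isPosSemidef : m.IsPosSemidef
  card_eq_finrank : Fintype.card ι = Module.finrank ℝ V
  orthonormal : ∀ i j, m (u i) (u j) = if i = j then 1 else 0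
  eigen : ∀ i v, a v (u i) = lam i * m v (u i)

section Eigenbasis

variable {ι V : Type*} [Fintype ι] [DecidableEq ι] [AddCommGroup V] [Module ℝ V]
  {a m : BilinForm ℝ V} {lam : ι → ℝ} {u : ι → V}

theorem sum_apply_smul_of_orthonormal [Nonempty ι] (hcard : Fintype.card ι = Module.finrank ℝ V)
    (hu : ∀ i j, m (u i) (u j) = if i = j then 1 else 0) (v : V) : ∑ i, m (u i) v • u i = v := by
  have hindep : LinearIndependent ℝ u := by
    refine LinearMap.BilinForm.linearIndependent_of_iIsOrtho (B := m) ?_ fun i h ↦ ?_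
    · intro i j hij
      exact (hu i j).trans (if_neg hij)
    · simp [hu] at h
  have hmem : v ∈ Submodule.span ℝ (Set.range u) := by
    rw [hindep.span_eq_top_of_card_eq_finrank hcard]
    exact Submodule.mem_top
  obtain ⟨c, rfl⟩ := (Submodule.mem_span_range_iff_exists_fun ℝ).mp hmem
  simp [map_sum, hu]

namespace IsEigenbasis

variable [Nonempty ι]

theorem apply_eq_sum (h : IsEigenbasis a m lam u) (v w : V) :
    a v w = ∑ i, lam i * (m (u i) v * m (u i) w) := by
  conv_lhs => rw [← sum_apply_smul_of_orthonormal h.card_eq_finrank h.orthonormal w, map_sum]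
  refine Finset.sum_congr rfl fun i _ ↦ ?_
  rw [map_smul, smul_eq_mul, h.eigen, h.isPosSemidef.isSymm.eq v]
  ring

theorem apply_self_eq_sum (h : IsEigenbasis a m lam u) (v : V) :
    m v v = ∑ i, m (u i) v ^ 2 := by
  conv_lhs => rw [← sum_apply_smul_of_orthonormal h.card_eq_finrank h.orthonormal v, map_sum]
  refine Finset.sum_congr rfl fun i _ ↦ ?_
  rw [sum_apply_smul_of_orthonormal h.card_eq_finrank h.orthonormal, map_smul, smul_eq_mul,
    h.isPosSemidef.isSymm.eq v, sq]

theorem apply_self_le (h : IsEigenbasis a m lam u) {top : ℝ} (htop : ∀ i, lam i ≤ top) (v : V) :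
    a v v ≤ top * m v v := by
  simp only [h.apply_eq_sum, h.apply_self_eq_sum, Finset.mul_sum, ← sq]
  exact Finset.sum_le_sum fun i _ ↦ mul_le_mul_of_nonneg_right (htop i) (sq_nonneg _)

theorem hasSpectralGap (h : IsEigenbasis a m lam u) {i₀ : ι} {l₂ : ℝ} (hgap : lam i₀ < l₂)
    (hlam : ∀ i, i ≠ i₀ → l₂ ≤ lam i) :
    HasSpectralGap a m (u i₀) (lam i₀) (l₂ - lam i₀) where
  isSymm := ⟨fun v w ↦ by simp only [h.apply_eq_sum, mul_comm]⟩
  isPosSemidef := h.isPosSemidef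
  unit := by rw [h.orthonormal, if_pos rfl]
  eigen v := by simp [h.apply_eq_sum, h.orthonormal]
  gap_pos := sub_pos.mpr hgap
  gap_mul_le v := by
    simp only [h.apply_eq_sum, h.apply_self_eq_sum, ← sq]
    rw [Finset.mul_sum, ← Finset.sum_sub_distrib, ← Finset.add_sum_erase _ _ (Finset.mem_univ i₀),
      ← Finset.add_sum_erase (a := i₀) _ (fun i ↦ lam i * _ - _) (Finset.mem_univ i₀), sub_self,
      zero_add, add_sub_cancel_left, Finset.mul_sum]
    refine Finset.sum_le_sum fun i hi ↦ ?_
    rw [← sub_mul]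
    gcongr
    exact hlam i (Finset.ne_of_mem_erase hi)

end IsEigenbasis

end Eigenbasis

/-- `ξmin` and `ξmax` are the extreme values of the Rayleigh quotient of `(a, m)` on the directions
`m q d = 0`, and both are attained. -/
structure SliceExtremes {V : Type*} [AddCommGroup V] [Module ℝ V] (a m : BilinForm ℝ V) (q : V)
    (ξmin ξmax : ℝ) : Prop where
  le_apply_self : ∀ d, m q d = 0 → ξmin * m d d ≤ a d d
  apply_self_le : ∀ d, m q d = 0 → a d d ≤ ξmax * m d d
  exists_min : ∃ d, m q d = 0 ∧ 0 < m d d ∧ a d d = ξmin * m d d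
  exists_max : ∃ d, m q d = 0 ∧ 0 < m d d ∧ a d d = ξmax * m d d

namespace SliceExtremes

variable {V : Type*} [AddCommGroup V] [Module ℝ V] {a m : BilinForm ℝ V} {u q : V}
  {l₁ l₂ lₙ δ ξmin ξmax χ : ℝ}

theorem le_min (e : SliceExtremes a m q ξmin ξmax) {c : ℝ}
    (hc : ∀ d, m q d = 0 → c * m d d ≤ a d d) : c ≤ ξmin := by
  obtain ⟨d, hqd, hdd, had⟩ := e.exists_min
  exact le_of_mul_le_mul_right (had ▸ hc d hqd) hdd

theorem max_le (e : SliceExtremes a m q ξmin ξmax) {c : ℝ}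
    (hc : ∀ d, m q d = 0 → a d d ≤ c * m d d) : ξmax ≤ c := by
  obtain ⟨d, hqd, hdd, had⟩ := e.exists_max
  exact le_of_mul_le_mul_right (had ▸ hc d hqd) hdd

theorem admissibleConstants (e : SliceExtremes a m q ξmin ξmax)
    (h : HasSpectralGap a m u l₁ (l₂ - l₁)) (hq : m q q = 1) (hl₁ : 0 < l₁)
    (htop : ∀ v, a v v ≤ lₙ * m v v) (hχ : χ = chiI l₁ l₂ ξmin ξmax)
    (hρ : rayleigh a m q ≤ l₁ + (l₂ - l₁) / (2 + χ)) :
    AdmissibleConstants l₁ l₂ lₙ ξmin ξmax χ (rayleigh a m q - l₁) where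
  bottom_pos := hl₁
  bottom_lt_second := sub_pos.mp h.gap_pos
  bottom_le_min := e.le_min fun d _ ↦ h.mul_apply_self_le d
  second_sub_le_min := e.le_min fun d hd ↦ by
    simpa using h.add_gap_sub_mul_apply_self_le hq (add_sub_cancel l₁ _).ge hd
  min_le_max :=
    have ⟨d, hqd, hdd, had⟩ := e.exists_min
    le_of_mul_le_mul_right (had ▸ e.apply_self_le d hqd) hdd
  max_le_top := e.max_le fun d _ ↦ htop d
  chi_eq := hχ
  delta_nonneg := sub_nonneg.mpr (h.le_rayleigh (hq ▸ one_pos))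
  delta_le := sub_le_iff_le_add'.mpr hρ

theorem sublevelChart (e : SliceExtremes a m q ξmin ξmax) (h : HasSpectralGap a m u l₁ (l₂ - l₁))
    (hq : m q q = 1) (c : AdmissibleConstants l₁ l₂ lₙ ξmin ξmax χ (rayleigh a m q - l₁)) :
    SublevelChart a m u q l₁ (l₂ - l₁) (rayleigh a m q - l₁) ξmin ξmax where
  toHasSpectralGap := h
  bottom_nonneg := c.bottom_pos.le
  center_unit := hq
  rayleigh_center_le := (add_sub_cancel l₁ _).ge
  ten_mul_le := c.ten_mul_delta_le
  le_apply_self := e.le_apply_self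
  apply_self_le := e.apply_self_le

end SliceExtremes

section Matrices

variable {ι κ : Type*} [Fintype ι] [DecidableEq ι] [Fintype κ]
  {A M : Matrix ι ι ℝ} {q : ι → ℝ} {Q : Matrix ι κ ℝ} {ξmin ξmax : ℝ}

theorem isPosSemidef_toBilin' (hM : M.PosSemidef) : (toBilin' M).IsPosSemidef where
  isSymm := isSymm_toBilin'_iff_isSymm.mpr hM.isHermitian
  isNonneg := ⟨fun v ↦ by simpa [toBilin'_apply'] using hM.dotProduct_mulVec_nonneg v⟩

theorem toBilin'_apply_self_pos (hM : M.PosDef) {v : ι → ℝ} (hv : v ≠ 0) :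
    0 < toBilin' M v v := by
  simpa [toBilin'_apply'] using hM.dotProduct_mulVec_pos hv

theorem isEigenbasis_toBilin' {lam : ι → ℝ} {u : ι → ι → ℝ} (hM : M.PosSemidef)
    (heig : ∀ i, A *ᵥ u i = lam i • (M *ᵥ u i))
    (horth : ∀ i j, u i ⬝ᵥ (M *ᵥ u j) = if i = j then 1 else 0) :
    IsEigenbasis (toBilin' A) (toBilin' M) lam u where
  isPosSemidef := isPosSemidef_toBilin' hM
  card_eq_finrank := (Module.finrank_fintype_fun_eq_card ℝ).symm
  orthonormal i j := by rw [toBilin'_apply', horth]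
  eigen i v := by
    rw [toBilin'_apply', toBilin'_apply', heig, dotProduct_smul, smul_eq_mul]

theorem toBilin'_apply_mulVec_eq_zero (hM : M.IsSymm) (hQMq : (Qᵀ * M) *ᵥ q = 0) (y : κ → ℝ) :
    toBilin' M q (Q *ᵥ y) = 0 := by
  rw [(isSymm_toBilin'_iff_isSymm.mpr hM).eq, toBilin'_apply', ← vecMul_transpose,
    ← dotProduct_mulVec, mulVec_mulVec, hQMq, dotProduct_zero]

theorem posSemidef_of_forall_eigenvalue_nonneg {C : Matrix κ κ ℝ} (hC : C.IsHermitian)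
    (h : ∀ (ξ : ℝ) v, v ≠ 0 → C *ᵥ v = ξ • v → 0 ≤ ξ) : C.PosSemidef := by
  classical
  refine hC.posSemidef_iff_eigenvalues_nonneg.mpr fun i ↦ ?_
  refine h _ _ (fun h0 ↦ ?_) (hC.mulVec_eigenvectorBasis i)
  exact hC.eigenvectorBasis.orthonormal.ne_zero i (by ext j; exact congrFun h0 j)

theorem le_dotProduct_mulVec_of_isLeast {C : Matrix κ κ ℝ} (hC : C.IsHermitian)
    (hmin : IsLeast {ξ : ℝ | ∃ v : κ → ℝ, v ≠ 0 ∧ C *ᵥ v = ξ • v} ξmin) (v : κ → ℝ) :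
    ξmin * (v ⬝ᵥ v) ≤ v ⬝ᵥ (C *ᵥ v) := by
  classical
  have hpos : (C - ξmin • 1).PosSemidef := by
    refine posSemidef_of_forall_eigenvalue_nonneg
      (hC.sub (isHermitian_one.smul (IsSelfAdjoint.all ξmin))) fun ξ w hw hξ ↦ ?_
    rw [sub_mulVec, smul_mulVec, one_mulVec, sub_eq_iff_eq_add, ← add_smul] at hξ
    linarith [hmin.2 ⟨w, hw, hξ⟩]
  simpa [sub_mulVec, smul_mulVec] using hpos.dotProduct_mulVec_nonneg v

theorem dotProduct_mulVec_le_of_isGreatest {C : Matrix κ κ ℝ} (hC : C.IsHermitian)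
    (hmax : IsGreatest {ξ : ℝ | ∃ v : κ → ℝ, v ≠ 0 ∧ C *ᵥ v = ξ • v} ξmax) (v : κ → ℝ) :
    v ⬝ᵥ (C *ᵥ v) ≤ ξmax * (v ⬝ᵥ v) := by
  classical
  have hpos : (ξmax • 1 - C).PosSemidef := by
    refine posSemidef_of_forall_eigenvalue_nonneg
      ((isHermitian_one.smul (IsSelfAdjoint.all ξmax)).sub hC) fun ξ w hw hξ ↦ ?_
    rw [sub_mulVec, smul_mulVec, one_mulVec, sub_eq_iff_eq_add, ← sub_eq_iff_eq_add',
      ← sub_smul] at hξ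
    linarith [hmax.2 ⟨w, hw, hξ.symm⟩]
  simpa [sub_mulVec, smul_mulVec] using hpos.dotProduct_mulVec_nonneg v

variable [DecidableEq κ]

theorem toBilin'_mulVec_mulVec (M : Matrix ι ι ℝ) (Q : Matrix ι κ ℝ) (x y : κ → ℝ) :
    toBilin' M (Q *ᵥ x) (Q *ᵥ y) = toBilin' (Qᵀ * M * Q) x y :=
  LinearMap.congr_fun₂ (toBilin'_comp M Q Q) x y

theorem toBilin'_one_apply (x y : κ → ℝ) : toBilin' (1 : Matrix κ κ ℝ) x y = x ⬝ᵥ y := by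
  rw [toBilin'_apply', one_mulVec]

theorem exists_eq_mulVec_of_toBilin'_apply_eq_zero (hM : M.IsSymm)
    (hcard : Fintype.card ι = Fintype.card κ + 1) (hq : q ⬝ᵥ (M *ᵥ q) = 1)
    (hQMQ : Qᵀ * M * Q = 1) (hQMq : (Qᵀ * M) *ᵥ q = 0) {d : ι → ℝ} (hd : toBilin' M q d = 0) :
    ∃ y, d = Q *ᵥ y := by
  have hcol (i : κ) : Q.col i = Q *ᵥ Pi.single i 1 := (mulVec_single_one Q i).symm
  have horth : ∀ i j : Option κ, toBilin' M (i.elim q Q.col) (j.elim q Q.col) =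
      if i = j then 1 else 0 := by
    have hqQ (j : κ) : toBilin' M q (Q.col j) = 0 :=
      hcol j ▸ toBilin'_apply_mulVec_eq_zero hM hQMq _
    have hsymm := (isSymm_toBilin'_iff_isSymm.mpr hM).eq
    rintro (_ | i) (_ | j)
    · simpa [toBilin'_apply'] using hq
    · simpa using hqQ j
    · simpa using (hsymm _ _).trans (hqQ i)
    · rw [Option.elim_some, Option.elim_some, hcol, hcol, toBilin'_mulVec_mulVec, hQMQ,
        toBilin'_one_apply]
      simp [Pi.single_apply, eq_comm]
  have hexpand : ∑ j, toBilin' M (Q.col j) d • Q.col j = d := by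
    simpa only [Fintype.sum_option, Option.elim_none, Option.elim_some, hd, zero_smul, zero_add]
      using sum_apply_smul_of_orthonormal (by simp [hcard]) horth d
  refine ⟨fun j ↦ toBilin' M (Q.col j) d, ?_⟩
  simp only [mulVec_eq_sum, op_smul_eq_smul]
  exact hexpand.symm

theorem sliceExtremes_toBilin' (hA : A.IsSymm) (hM : M.IsSymm)
    (hcard : Fintype.card ι = Fintype.card κ + 1) (hq : q ⬝ᵥ (M *ᵥ q) = 1)
    (hQMQ : Qᵀ * M * Q = 1) (hQMq : (Qᵀ * M) *ᵥ q = 0)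
    (hmin : IsLeast {ξ : ℝ | ∃ v : κ → ℝ, v ≠ 0 ∧ (Qᵀ * A * Q) *ᵥ v = ξ • v} ξmin)
    (hmax : IsGreatest {ξ : ℝ | ∃ v : κ → ℝ, v ≠ 0 ∧ (Qᵀ * A * Q) *ᵥ v = ξ • v} ξmax) :
    SliceExtremes (toBilin' A) (toBilin' M) q ξmin ξmax := by
  have hC : (Qᵀ * A * Q).IsHermitian := isHermitian_conjTranspose_mul_mul Q hA
  have hm (y : κ → ℝ) : toBilin' M (Q *ᵥ y) (Q *ᵥ y) = y ⬝ᵥ y := by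
    rw [toBilin'_mulVec_mulVec, hQMQ, toBilin'_one_apply]
  have ha (y : κ → ℝ) : toBilin' A (Q *ᵥ y) (Q *ᵥ y) = y ⬝ᵥ ((Qᵀ * A * Q) *ᵥ y) := by
    rw [toBilin'_mulVec_mulVec, toBilin'_apply']
  have hslice {d : ι → ℝ} (hd : toBilin' M q d = 0) : ∃ y, d = Q *ᵥ y :=
    exists_eq_mulVec_of_toBilin'_apply_eq_zero hM hcard hq hQMQ hQMq hd
  have hattained {ξ : ℝ} : (∃ v : κ → ℝ, v ≠ 0 ∧ (Qᵀ * A * Q) *ᵥ v = ξ • v) →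
      ∃ d, toBilin' M q d = 0 ∧ 0 < toBilin' M d d ∧ toBilin' A d d = ξ * toBilin' M d d := by
    rintro ⟨v, hv, hξ⟩
    refine ⟨Q *ᵥ v, toBilin'_apply_mulVec_eq_zero hM hQMq v, ?_, ?_⟩
    · simpa [hm] using dotProduct_star_self_pos_iff.mpr hv
    · rw [hm, ha, hξ, dotProduct_smul, smul_eq_mul]
  refine ⟨fun d hd ↦ ?_, fun d hd ↦ ?_, hattained hmin.1, hattained hmax.1⟩ <;>
    obtain ⟨y, rfl⟩ := hslice hd <;> rw [hm, ha]
  · exact le_dotProduct_mulVec_of_isLeast hC hmin y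
  · exact dotProduct_mulVec_le_of_isGreatest hC hmax y

end Matrices

/-! ### The EIC iteration -/

section Normalization

variable {V : Type*} [AddCommGroup V] [Module ℝ V] {m : BilinForm ℝ V} {q v : V}

/-- The central projection of `v` onto the slice `m q v = 1`, that is `q + Qψ(v)` in the notation
of the paper; it takes the junk value `0` where `m q v = 0`. -/
noncomputable def slicePoint (m : BilinForm ℝ V) (q v : V) : V := (m q v)⁻¹ • v

theorem apply_slicePoint (hv : m q v ≠ 0) : m q (slicePoint m q v) = 1 := by
  rw [slicePoint, map_smul, smul_eq_mul, inv_mul_cancel₀ hv]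

theorem apply_smul_slicePoint (hv : m q v ≠ 0) : m q v • slicePoint m q v = v :=
  smul_inv_smul₀ hv v

theorem slicePoint_smul {c : ℝ} (hc : c ≠ 0) (v : V) :
    slicePoint m q (c • v) = slicePoint m q v := by
  rw [slicePoint, slicePoint, map_smul, smul_eq_mul, smul_smul, mul_inv,
    mul_right_comm, inv_mul_cancel₀ hc, one_mul]

theorem slicePoint_of_apply_eq_one (hv : m q v = 1) : slicePoint m q v = v := by
  rw [slicePoint, hv, inv_one, one_smul]

theorem rayleigh_slicePoint {a : BilinForm ℝ V} (hv : m q v ≠ 0) :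
    rayleigh a m (slicePoint m q v) = rayleigh a m v :=
  rayleigh_smul (inv_ne_zero hv) v

variable {n : ℕ} {A M : Matrix (Fin n) (Fin n) ℝ} {q v : Fin n → ℝ}

theorem Rq_eq_rayleigh (A M : Matrix (Fin n) (Fin n) ℝ) (v : Fin n → ℝ) :
    Rq A M v = rayleigh (toBilin' A) (toBilin' M) v := by
  rw [Rq, rayleigh, toBilin'_apply', toBilin'_apply']

theorem Mnorm_pos (hM : M.PosDef) (hv : v ≠ 0) : 0 < Mnorm M v := by
  rw [Mnorm, ← toBilin'_apply']
  exact Real.sqrt_pos.mpr (toBilin'_apply_self_pos hM hv)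

theorem Rq_Mnormalize (hM : M.PosDef) (hv : v ≠ 0) : Rq A M (Mnormalize M v) = Rq A M v := by
  rw [Mnormalize, Rq_eq_rayleigh, Rq_eq_rayleigh,
    rayleigh_smul (inv_ne_zero (Mnorm_pos hM hv).ne')]

theorem slicePoint_Mnormalize (hM : M.PosDef) (hv : v ≠ 0) :
    slicePoint (toBilin' M) q (Mnormalize M v) = slicePoint (toBilin' M) q v :=
  slicePoint_smul (inv_ne_zero (Mnorm_pos hM hv).ne') v

theorem toBilin'_Mnormalize_self (hM : M.PosDef) (hv : v ≠ 0) :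
    toBilin' M (Mnormalize M v) (Mnormalize M v) = 1 := by
  have hnorm := (Mnorm_pos hM hv).ne'
  have hsq : toBilin' M v v = Mnorm M v ^ 2 := by
    rw [Mnorm, ← toBilin'_apply', Real.sq_sqrt (toBilin'_apply_self_pos hM hv).le]
  simp only [Mnormalize, map_smul, LinearMap.smul_apply, smul_eq_mul, hsq]
  field_simp

theorem ne_zero_of_toBilin'_apply_pos (hv : 0 < toBilin' M q v) : v ≠ 0 := by
  rintro rfl
  simp at hv

theorem toBilin'_apply_Mnormalize_pos (hM : M.PosDef) (hv : 0 < toBilin' M q v) :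
    0 < toBilin' M q (Mnormalize M v) := by
  rw [Mnormalize, map_smul]
  exact smul_pos (inv_pos.mpr (Mnorm_pos hM (ne_zero_of_toBilin'_apply_pos hv))) hv

theorem Mnormalize_mem_Xset (hM : M.PosDef) (hv : 0 < toBilin' M q v)
    (hRq : Rq A M v ≤ Rq A M q) : Mnormalize M v ∈ Xset A M q := by
  have hv₀ := ne_zero_of_toBilin'_apply_pos hv
  refine ⟨⟨?_, ?_⟩, (Rq_Mnormalize hM hv₀).trans_le hRq⟩
  · rw [Mnorm, ← toBilin'_apply', toBilin'_Mnormalize_self hM hv₀, Real.sqrt_one]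
  · simpa only [toBilin'_apply'] using toBilin'_apply_Mnormalize_pos hM hv

theorem one_sub_vecMulVec_mulVec (M : Matrix (Fin n) (Fin n) ℝ) (q v : Fin n → ℝ) :
    (1 - vecMulVec q (q ᵥ* M)) *ᵥ v = v - toBilin' M q v • q := by
  rw [sub_mulVec, one_mulVec, vecMulVec_mulVec, op_smul_eq_smul, ← dotProduct_mulVec,
    toBilin'_apply']

theorem toBilin'_inv_mulVec_apply (hM : M.PosDef) (v d : Fin n → ℝ) :
    toBilin' M (M⁻¹ *ᵥ v) d = v ⬝ᵥ d := by
  rw [(isPosSemidef_toBilin' hM.posSemidef).isSymm.eq, toBilin'_apply', mulVec_mulVec,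
    mul_nonsing_inv _ ((isUnit_iff_isUnit_det _).mp hM.isUnit), one_mulVec, dotProduct_comm]

end Normalization

section SliceGradient

/-- The gradient of the Rayleigh quotient on the slice `qᵀMv = 1`, with respect to the inner product
of `M`, at the slice point of `x`, where `r = 2(Ax - Rq(x)Mx)` and `‖x‖_M = 1`. -/
noncomputable def sliceGrad {n : ℕ} (M : Matrix (Fin n) (Fin n) ℝ) (q x r : Fin n → ℝ) :
    Fin n → ℝ :=
  toBilin' M q x • (M⁻¹ *ᵥ r - toBilin' M q (M⁻¹ *ᵥ r) • q)

variable {n : ℕ} {A M : Matrix (Fin n) (Fin n) ℝ} {q : Fin n → ℝ}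

theorem apply_sliceGrad (hq : toBilin' M q q = 1) (x r : Fin n → ℝ) :
    toBilin' M q (sliceGrad M q x r) = 0 := by
  rw [sliceGrad, map_smul, map_sub, map_smul, hq, smul_eq_mul, smul_eq_mul, mul_one, sub_self,
    mul_zero]

theorem sliceGrad_apply (hA : A.IsSymm) (hM : M.PosDef) {x d : Fin n → ℝ}
    (hx : toBilin' M x x = 1) (hqx : toBilin' M q x ≠ 0) (hd : toBilin' M q d = 0) :
    toBilin' M (sliceGrad M q x ((2 : ℝ) • (A *ᵥ x - Rq A M x • (M *ᵥ x)))) d =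
      rayleighDeriv (toBilin' A) (toBilin' M) (slicePoint (toBilin' M) q x) d := by
  have hAxd : toBilin' A x d = (A *ᵥ x) ⬝ᵥ d := by
    rw [(isSymm_toBilin'_iff_isSymm.mpr hA).eq, toBilin'_apply', dotProduct_comm]
  have hMxd : toBilin' M x d = (M *ᵥ x) ⬝ᵥ d := by
    rw [(isPosSemidef_toBilin' hM.posSemidef).isSymm.eq, toBilin'_apply', dotProduct_comm]
  rw [slicePoint, rayleighDeriv_smul (inv_ne_zero hqx), rayleighDeriv, hx, ← Rq_eq_rayleigh,
    sliceGrad]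
  simp only [map_smul, map_sub, LinearMap.smul_apply, LinearMap.sub_apply, smul_eq_mul, hd,
    toBilin'_inv_mulVec_apply hM, smul_dotProduct, sub_dotProduct, hAxd, hMxd, inv_inv]
  ring

end SliceGradient

/-- The EIC iteration with step parameter `τ` and modulus `μ`: the primal iterates `x`, the estimate
sequence `z`, the extrapolated points `xbar` and the residuals `r`. -/
structure Iterates {n : ℕ} (A M : Matrix (Fin n) (Fin n) ℝ) (q : Fin n → ℝ) (τ μ : ℝ)
    (x z xbar r : ℕ → Fin n → ℝ) : Prop where
  primal_zero_mem : x 0 ∈ Xset A M q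
  estimate_zero : z 0 = x 0
  extrapolate : ∀ k, xbar k = Mnormalize M
    ((q ⬝ᵥ (M *ᵥ x k))⁻¹ • x k + (τ * (q ⬝ᵥ (M *ᵥ z k))⁻¹) • z k)
  residual : ∀ k, r k = (2 : ℝ) • (A *ᵥ xbar k - Rq A M (xbar k) • (M *ᵥ xbar k))
  estimate_succ : ∀ k, z (k + 1) = Mnormalize M
    (((1 - τ) * (q ⬝ᵥ (M *ᵥ z k))⁻¹) • z k + (τ * (q ⬝ᵥ (M *ᵥ xbar k))⁻¹) • xbar k -
      (τ * (q ⬝ᵥ (M *ᵥ xbar k)) / μ) • ((1 - vecMulVec q (q ᵥ* M)) *ᵥ (M⁻¹ *ᵥ r k)))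
  primal_succ : ∀ k,
    x (k + 1) ∈ Xset A M q ∩
      (Submodule.span ℝ {q, x k, xbar k, M⁻¹ *ᵥ r k} : Submodule ℝ (Fin n → ℝ)) ∧
    ∀ v ∈ Xset A M q ∩
      (Submodule.span ℝ {q, x k, xbar k, M⁻¹ *ᵥ r k} : Submodule ℝ (Fin n → ℝ)),
      Rq A M (x (k + 1)) ≤ Rq A M v

namespace Iterates

variable {n : ℕ} {A M : Matrix (Fin n) (Fin n) ℝ} {q : Fin n → ℝ} {τ μ L : ℝ}
  {x z xbar r : ℕ → Fin n → ℝ}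

theorem primal_mem (h : Iterates A M q τ μ x z xbar r) : ∀ k, x k ∈ Xset A M q
  | 0 => h.primal_zero_mem
  | k + 1 => (h.primal_succ k).1.1

theorem Rq_primal_succ_le (h : Iterates A M q τ μ x z xbar r) (k : ℕ) :
    Rq A M (x (k + 1)) ≤ Rq A M (x k) :=
  (h.primal_succ k).2 (x k) ⟨h.primal_mem k, Submodule.subset_span (by simp)⟩

theorem apply_primal_pos (h : Iterates A M q τ μ x z xbar r) (k : ℕ) :
    0 < toBilin' M q (x k) := by
  rw [toBilin'_apply']
  exact (h.primal_mem k).1.2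

theorem extrapolate_eq (h : Iterates A M q τ μ x z xbar r) (k : ℕ) :
    xbar k = Mnormalize M
      (slicePoint (toBilin' M) q (x k) + τ • slicePoint (toBilin' M) q (z k)) := by
  rw [h.extrapolate, slicePoint, slicePoint, smul_smul, toBilin'_apply', toBilin'_apply']

theorem estimate_succ_eq (h : Iterates A M q τ μ x z xbar r) (k : ℕ) :
    z (k + 1) = Mnormalize M ((1 - τ) • slicePoint (toBilin' M) q (z k) +
      τ • slicePoint (toBilin' M) q (xbar k) - (τ / μ) • sliceGrad M q (xbar k) (r k)) := by
  rw [h.estimate_succ, one_sub_vecMulVec_mulVec, slicePoint, slicePoint, sliceGrad, smul_smul,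
    smul_smul, smul_smul, div_mul_eq_mul_div]
  simp only [toBilin'_apply']

theorem apply_unnormalized_extrapolate (h : Iterates A M q τ μ x z xbar r) {k : ℕ}
    (hz : 0 < toBilin' M q (z k)) :
    toBilin' M q (slicePoint (toBilin' M) q (x k) + τ • slicePoint (toBilin' M) q (z k)) =
      1 + τ := by
  rw [map_add, map_smul, apply_slicePoint (h.apply_primal_pos k).ne', apply_slicePoint hz.ne',
    smul_eq_mul, mul_one]

theorem apply_extrapolate_pos_of_estimate_pos (h : Iterates A M q τ μ x z xbar r)
    (hM : M.PosDef) (hτ : 0 ≤ τ) {k : ℕ} (hz : 0 < toBilin' M q (z k)) :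
    0 < toBilin' M q (xbar k) := by
  rw [h.extrapolate_eq]
  exact toBilin'_apply_Mnormalize_pos hM (by
    rw [h.apply_unnormalized_extrapolate hz]
    linarith)

theorem apply_unnormalized_estimate (h : Iterates A M q τ μ x z xbar r) (hM : M.PosDef)
    (hq : toBilin' M q q = 1) (hτ : 0 ≤ τ) {k : ℕ} (hz : 0 < toBilin' M q (z k)) :
    toBilin' M q ((1 - τ) • slicePoint (toBilin' M) q (z k) +
      τ • slicePoint (toBilin' M) q (xbar k) - (τ / μ) • sliceGrad M q (xbar k) (r k)) = 1 := by
  simp only [map_sub, map_add, map_smul, smul_eq_mul, apply_slicePoint hz.ne',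
    apply_slicePoint (h.apply_extrapolate_pos_of_estimate_pos hM hτ hz).ne', apply_sliceGrad hq]
  ring

theorem apply_estimate_pos (h : Iterates A M q τ μ x z xbar r) (hM : M.PosDef)
    (hq : toBilin' M q q = 1) (hτ : 0 ≤ τ) (k : ℕ) : 0 < toBilin' M q (z k) := by
  induction k with
  | zero => exact h.estimate_zero ▸ h.apply_primal_pos 0
  | succ k ih =>
    rw [h.estimate_succ_eq]
    exact toBilin'_apply_Mnormalize_pos hM
      (one_pos.trans_eq (h.apply_unnormalized_estimate hM hq hτ ih).symm)

theorem apply_extrapolate_pos (h : Iterates A M q τ μ x z xbar r) (hM : M.PosDef)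
    (hq : toBilin' M q q = 1) (hτ : 0 ≤ τ) (k : ℕ) : 0 < toBilin' M q (xbar k) :=
  h.apply_extrapolate_pos_of_estimate_pos hM hτ (h.apply_estimate_pos hM hq hτ k)

theorem smul_slicePoint_extrapolate (h : Iterates A M q τ μ x z xbar r) (hM : M.PosDef)
    (hq : toBilin' M q q = 1) (hτ : 0 ≤ τ) (k : ℕ) :
    (1 + τ) • slicePoint (toBilin' M) q (xbar k) =
      slicePoint (toBilin' M) q (x k) + τ • slicePoint (toBilin' M) q (z k) := by
  have harg := h.apply_unnormalized_extrapolate (h.apply_estimate_pos hM hq hτ k)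
  have hτ' : 0 < 1 + τ := by linarith
  rw [h.extrapolate_eq,
    slicePoint_Mnormalize hM (ne_zero_of_toBilin'_apply_pos (harg.symm ▸ hτ')),
    ← harg, apply_smul_slicePoint (harg.symm ▸ hτ'.ne')]

theorem slicePoint_estimate_succ (h : Iterates A M q τ μ x z xbar r) (hM : M.PosDef)
    (hq : toBilin' M q q = 1) (hτ : 0 ≤ τ) (k : ℕ) :
    slicePoint (toBilin' M) q (z (k + 1)) = (1 - τ) • slicePoint (toBilin' M) q (z k) +
      τ • slicePoint (toBilin' M) q (xbar k) - (τ / μ) • sliceGrad M q (xbar k) (r k) := by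
  have harg := h.apply_unnormalized_estimate hM hq hτ (h.apply_estimate_pos hM hq hτ k)
  rw [h.estimate_succ_eq,
    slicePoint_Mnormalize hM (ne_zero_of_toBilin'_apply_pos (harg.symm ▸ one_pos)),
    slicePoint_of_apply_eq_one harg]

theorem extrapolate_self (h : Iterates A M q τ μ x z xbar r) (hM : M.PosDef)
    (hq : toBilin' M q q = 1) (hτ : 0 ≤ τ) (k : ℕ) : toBilin' M (xbar k) (xbar k) = 1 := by
  have harg := h.apply_unnormalized_extrapolate (h.apply_estimate_pos hM hq hτ k)
  rw [h.extrapolate_eq]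
  exact toBilin'_Mnormalize_self hM (ne_zero_of_toBilin'_apply_pos (by rw [harg]; linarith))

theorem Rq_primal_succ_le_of_mem_span (h : Iterates A M q τ μ x z xbar r) (hM : M.PosDef) {k : ℕ}
    {v : Fin n → ℝ} (hv : 0 < toBilin' M q v) (hRq : Rq A M v ≤ Rq A M q)
    (hspan : v ∈ Submodule.span ℝ {q, x k, xbar k, M⁻¹ *ᵥ r k}) :
    Rq A M (x (k + 1)) ≤ Rq A M v :=
  ((h.primal_succ k).2 _ ⟨Mnormalize_mem_Xset hM hv hRq, Submodule.smul_mem _ _ hspan⟩).trans_eq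
    (Rq_Mnormalize hM (ne_zero_of_toBilin'_apply_pos hv))

theorem gradientStep_mem_span (M : Matrix (Fin n) (Fin n) ℝ) (q x xbar r : Fin n → ℝ) (c : ℝ) :
    slicePoint (toBilin' M) q xbar - c • sliceGrad M q xbar r ∈
      Submodule.span ℝ {q, x, xbar, M⁻¹ *ᵥ r} := by
  have hmem {v : Fin n → ℝ} (hv : v ∈ ({q, x, xbar, M⁻¹ *ᵥ r} : Set (Fin n → ℝ))) :
      v ∈ Submodule.span ℝ {q, x, xbar, M⁻¹ *ᵥ r} := Submodule.subset_span hv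
  exact sub_mem (Submodule.smul_mem _ _ (hmem (by simp))) (Submodule.smul_mem _ _
    (Submodule.smul_mem _ _ (sub_mem (hmem (by simp)) (Submodule.smul_mem _ _ (hmem (by simp))))))

theorem acceleratedRun (h : Iterates A M q τ μ x z xbar r) (hA : A.IsSymm) (hM : M.PosDef)
    (hq : toBilin' M q q = 1) (hμ : 0 < μ) (hL : 0 < L) (hτ₀ : 0 ≤ τ) (hτ₁ : τ ≤ 1)
    (hτL : τ ^ 2 * L ≤ μ) :
    AcceleratedRun (toBilin' M) q (rayleigh (toBilin' A) (toBilin' M))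
      (rayleighDeriv (toBilin' A) (toBilin' M)) τ μ L (rayleigh (toBilin' A) (toBilin' M) q)
      (fun k ↦ slicePoint (toBilin' M) q (x k)) (fun k ↦ slicePoint (toBilin' M) q (z k))
      (fun k ↦ slicePoint (toBilin' M) q (xbar k)) (fun k ↦ sliceGrad M q (xbar k) (r k)) where
  modulus_pos := hμ
  smoothness_pos := hL
  step_nonneg := hτ₀
  step_le_one := hτ₁
  step_sq_mul_le := hτL
  estimate_zero := by rw [h.estimate_zero]
  apply_primal k := apply_slicePoint (h.apply_primal_pos k).ne'
  primal_le k := by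
    simpa only [rayleigh_slicePoint (h.apply_primal_pos k).ne', Rq_eq_rayleigh]
      using (h.primal_mem k).2
  extrapolate := h.smul_slicePoint_extrapolate hM hq hτ₀
  apply_grad k := apply_sliceGrad hq _ _
  grad_apply k d hd := h.residual k ▸ sliceGrad_apply hA hM (h.extrapolate_self hM hq hτ₀ k)
    (h.apply_extrapolate_pos hM hq hτ₀ k).ne' hd
  estimate_succ := h.slicePoint_estimate_succ hM hq hτ₀
  primal_succ_le k hle := by
    have hslice : toBilin' M q (slicePoint (toBilin' M) q (xbar k) -
        L⁻¹ • sliceGrad M q (xbar k) (r k)) = 1 := by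
      rw [map_sub, map_smul, apply_sliceGrad hq, smul_zero, sub_zero,
        apply_slicePoint (h.apply_extrapolate_pos hM hq hτ₀ k).ne']
    rw [rayleigh_slicePoint (h.apply_primal_pos _).ne']
    simp only [← Rq_eq_rayleigh] at hle ⊢
    exact h.Rq_primal_succ_le_of_mem_span hM (hslice.symm ▸ one_pos) hle
      (gradientStep_mem_span M q _ _ _ _)

end Iterates

theorem Iterates.Rq_primal_sub_le {n : ℕ} {A M : Matrix (Fin n) (Fin n) ℝ} {q u : Fin n → ℝ}
    {x z xbar r : ℕ → Fin n → ℝ} {τ μ L l gap ξmin ξmax : ℝ} (h : Iterates A M q τ μ x z xbar r)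
    (hM : M.PosDef)
    (chart : SublevelChart (toBilin' A) (toBilin' M) u q l gap
      (rayleigh (toBilin' A) (toBilin' M) q - l) ξmin ξmax)
    (hf : RestrictedConvexity (toBilin' M) q (rayleigh (toBilin' A) (toBilin' M))
      (rayleighDeriv (toBilin' A) (toBilin' M)) μ L
      (l + (rayleigh (toBilin' A) (toBilin' M) q - l) / 4)
      (l + (rayleigh (toBilin' A) (toBilin' M) q - l)))
    (hμ : 0 < μ) (hL : 0 < L) (hτ₀ : 0 ≤ τ) (hτ₁ : τ ≤ 1) (hτL : τ ^ 2 * L ≤ μ)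
    (hinit : 8 * L * (Rq A M (x 0) - l) ≤ μ * (Rq A M q - l)) (k : ℕ) :
    Rq A M (x k) - l ≤ 2 * (1 - τ) ^ k * (Rq A M (x 0) - l) := by
  have hδ := chart.delta_nonneg
  have hqu := chart.apply_bottom_ne_zero
  have hslice := apply_slicePoint hqu
  have hss := (one_pos.trans_le (chart.one_le_apply hslice)).ne'
  have heigen (d : Fin n → ℝ) : toBilin' A (slicePoint (toBilin' M) q u) d =
      l * toBilin' M (slicePoint (toBilin' M) q u) d := by
    simp only [slicePoint, map_smul, LinearMap.smul_apply, smul_eq_mul, chart.eigen]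
    ring
  have hbottom := rayleigh_of_eigen heigen hss
  have hrun := h.acceleratedRun (isSymm_toBilin'_iff_isSymm.mp chart.isSymm) hM
    chart.center_unit hμ hL hτ₀ hτ₁ hτL
  rw [add_sub_cancel] at hf
  have hrate := hrun.sub_le_pow_mul hf chart.isPosSemidef (by linarith) hslice
    (fun d _ ↦ rayleighDeriv_of_eigen heigen hss d) (by linarith)
  simp only [hbottom, rayleigh_slicePoint (h.apply_primal_pos _).ne', ← Rq_eq_rayleigh] at hrate
  exact hrate (by linarith) k

theorem sq_mul_le_of_le_rpow {τ μ L : ℝ} (hμ : 0 < μ) (hL : 0 < L) (hτ₀ : 0 ≤ τ)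
    (hτ : τ ≤ (L / μ) ^ (-(1 / 2) : ℝ)) : τ ^ 2 * L ≤ μ := by
  have hκ : 0 < L / μ := div_pos hL hμ
  have hsq : τ ^ 2 ≤ (L / μ)⁻¹ := by
    calc τ ^ 2 ≤ ((L / μ) ^ (-(1 / 2) : ℝ)) ^ 2 := by gcongr
      _ = (L / μ)⁻¹ := by
          rw [← Real.rpow_natCast, ← Real.rpow_mul hκ.le, ← Real.rpow_neg_one]
          norm_num
  rwa [inv_div, le_div_iff₀ hL] at hsq

theorem mul_le_of_le_div_max {c d e δ : ℝ} (he : 0 ≤ e) (hδ : 0 ≤ δ) (h : e ≤ δ / max c d) :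
    c * e ≤ δ := by
  rcases le_or_gt (max c d) 0 with hmax | hmax
  · exact (mul_nonpos_of_nonpos_of_nonneg ((le_max_left c d).trans hmax) he).trans hδ
  · exact (mul_le_mul_of_nonneg_right (le_max_left c d) he).trans ((le_div_iff₀' hmax).mp h)

end EIC

theorem stmt_17_general {n : ℕ} {A M : Matrix (Fin (n + 2)) (Fin (n + 2)) ℝ} (hM : M.PosDef)
    {q : Fin (n + 2) → ℝ} {Q : Matrix (Fin (n + 2)) (Fin (n + 1)) ℝ}
    (hq : q ⬝ᵥ (M *ᵥ q) = 1) (hQMQ : Qᵀ * M * Q = 1) (hQMq : (Qᵀ * M) *ᵥ q = 0)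
    {lam : Fin (n + 2) → ℝ} {u : Fin (n + 2) → Fin (n + 2) → ℝ}
    (hlam₀ : 0 < lam 0) (hlam₀₁ : lam 0 < lam 1) (hmono : Monotone lam)
    (heig : ∀ i, A *ᵥ u i = lam i • (M *ᵥ u i))
    (horth : ∀ i j, u i ⬝ᵥ (M *ᵥ u j) = if i = j then (1 : ℝ) else 0)
    {ξmin ξmax χ μ L τ : ℝ}
    (hmin : IsLeast {ξ : ℝ | ∃ v : Fin (n + 1) → ℝ, v ≠ 0 ∧ (Qᵀ * A * Q) *ᵥ v = ξ • v} ξmin)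
    (hmax : IsGreatest {ξ : ℝ | ∃ v : Fin (n + 1) → ℝ, v ≠ 0 ∧ (Qᵀ * A * Q) *ᵥ v = ξ • v} ξmax)
    (hχ : χ = EIC.chiI (lam 0) (lam 1) ξmin ξmax)
    (hμ : μ = EIC.muI (lam 0) (lam 1) ξmin χ (Rq A M q - lam 0))
    (hL : L = EIC.LI (lam 0) (lam 1) (lam (Fin.last (n + 1))) ξmin ξmax χ (Rq A M q - lam 0))
    (hμ₀ : 0 < μ) (hτ₀ : 0 ≤ τ) (hτ : τ ≤ (L / μ) ^ (-(1 / 2) : ℝ))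
    (hρ : Rq A M q ≤ lam 0 + (lam 1 - lam 0) / (2 + χ))
    {x z xbar r : ℕ → Fin (n + 2) → ℝ} (h : EIC.Iterates A M q τ μ x z xbar r)
    (hinit : 8 * (L / μ) * (Rq A M (x 0) - lam 0) ≤ Rq A M q - lam 0) :
    (∀ k, Rq A M (x (k + 1)) ≤ Rq A M (x k)) ∧
      ∀ k, Rq A M (x k) - lam 0 ≤ 2 * (1 - τ) ^ k * (Rq A M (x 0) - lam 0) := by
  have hbasis := EIC.isEigenbasis_toBilin' hM.posSemidef heig horth
  have hgap := hbasis.hasSpectralGap hlam₀₁ fun i hi ↦ hmono (Fin.one_le_of_ne_zero hi)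
  have hextremes := EIC.sliceExtremes_toBilin' (M := M)
    (isSymm_toBilin'_iff_isSymm.mp hgap.isSymm) hM.isHermitian (by simp) hq hQMQ hQMq hmin hmax
  have hq' : toBilin' M q q = 1 := by rw [toBilin'_apply', hq]
  rw [EIC.Rq_eq_rayleigh] at hρ hμ hL
  have hconst := hextremes.admissibleConstants hgap hq' hlam₀
    (hbasis.apply_self_le fun i ↦ hmono (Fin.le_last i)) hχ hρ
  have hchart := hextremes.sublevelChart hgap hq' hconst
  have hconvex := hconst.restrictedConvexity hchart
  have hμL := hconst.muI_le_LI
  rw [← hμ, ← hL] at hconvex hμL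
  have hL₀ := hμ₀.trans_le hμL
  have hτL := EIC.sq_mul_le_of_le_rpow hμ₀ hL₀ hτ₀ hτ
  have hτ₁ : τ ≤ 1 := (sq_le_one_iff₀ hτ₀).mp (le_of_mul_le_mul_right (by linarith) hL₀)
  refine ⟨h.Rq_primal_succ_le, h.Rq_primal_sub_le hM hchart hconvex hμ₀ hL₀ hτ₀ hτ₁ hτL ?_⟩
  calc 8 * L * (Rq A M (x 0) - lam 0) = μ * (8 * (L / μ) * (Rq A M (x 0) - lam 0)) := by
        field_simp
    _ ≤ μ * (Rq A M q - lam 0) := by gcongr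

/-- Convergence of EIC: with μ = μ_I, L = L_I from the convexity theorem (P = I),
κ = L/μ, 0 < τ ≤ κ^{−1/2}, ρ_q in the admissible range and a sufficiently good
initial vector x₀ ∈ X with z₀ = x₀, the EIC iterates satisfy monotone decline of
the Rayleigh quotient and Rq(x_k) − λ₁ ≤ 2(1−τ)^k (Rq(x₀) − λ₁). -/
theorem stmt_17 (n : ℕ)
    (A M : Matrix (Fin (n+2)) (Fin (n+2)) ℝ)
    (hA : A.PosDef) (hM : M.PosDef)
    (q : Fin (n+2) → ℝ) (Q : Matrix (Fin (n+2)) (Fin (n+1)) ℝ)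
    (hq1 : q ⬝ᵥ (M *ᵥ q) = 1)
    (hQMQ : Qᵀ * M * Q = 1)
    (hQMq : (Qᵀ * M) *ᵥ q = 0)
    (lam : Fin (n+2) → ℝ) (u : Fin (n+2) → Fin (n+2) → ℝ)
    (hlam0 : 0 < lam 0) (hlam01 : lam 0 < lam 1) (hmono : Monotone lam)
    (heig : ∀ i, A *ᵥ u i = lam i • (M *ᵥ u i))
    (horth : ∀ i j, u i ⬝ᵥ (M *ᵥ u j) = if i = j then (1:ℝ) else 0)
    (hqu1 : 0 < q ⬝ᵥ (M *ᵥ u 0))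
    (B : Matrix (Fin (n+1)) (Fin (n+1)) ℝ) (hB : B = Qᵀ * A * Q)
    (ρq : ℝ) (hρq : ρq = Rq A M q)
    (ximin ximax : ℝ)
    (hximin : IsLeast {ξ : ℝ | ∃ v : Fin (n+1) → ℝ, v ≠ 0 ∧ B *ᵥ v = ξ • v} ximin)
    (hximax : IsGreatest {ξ : ℝ | ∃ v : Fin (n+1) → ℝ, v ≠ 0 ∧ B *ᵥ v = ξ • v} ximax)
    (χI : ℝ)
    (hχI : χI = (8 * lam 1 / lam 0) * (ximax / ximin) *
      Real.sqrt ((lam 1 + lam 0) / (2 * (lam 1 - lam 0))))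
    (μ L : ℝ)
    (hμ : μ = 2 * ximin * (1 - 4 * (ρq - lam 0) / (lam 1 - lam 0)) *
      (1 - lam 0 / lam 1 - (2 + χI) * (ρq - lam 0) / lam 1))
    (hL : L = 2 * ximax * (1 - lam 0 / lam (Fin.last (n+1)) +
      (χI / lam 1) * (ximin / ximax) * (ρq - lam 0)))
    (hμpos : 0 < μ)
    (κ : ℝ) (hκ : κ = L / μ)
    (τ : ℝ) (hτ0 : 0 < τ) (hτ : τ ≤ κ ^ (-(1/2 : ℝ)))
    (hρ1 : lam 0 ≤ ρq) (hρ2 : ρq ≤ lam 0 + (lam 1 - lam 0) / (2 + χI))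
    (x z xbar r : ℕ → (Fin (n+2) → ℝ))
    (hx0 : x 0 ∈ Xset A M q)
    (hinit1 : 0 ≤ Rq A M (x 0) - lam 0)
    (hinit2 : Rq A M (x 0) - lam 0 ≤
      (ρq - lam 0) / max (8 * κ) (2 * κ * (1 + τ * κ) ^ 2))
    (hz0 : z 0 = x 0)
    (hxbar : ∀ k, xbar k = Mnormalize M
      ((q ⬝ᵥ (M *ᵥ x k))⁻¹ • x k + (τ * (q ⬝ᵥ (M *ᵥ z k))⁻¹) • z k))
    (hr : ∀ k, r k = (2 : ℝ) • (A *ᵥ xbar k - Rq A M (xbar k) • (M *ᵥ xbar k)))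
    (hz : ∀ k, z (k+1) = Mnormalize M
      (((1 - τ) * (q ⬝ᵥ (M *ᵥ z k))⁻¹) • z k +
        (τ * (q ⬝ᵥ (M *ᵥ xbar k))⁻¹) • xbar k -
        (τ * (q ⬝ᵥ (M *ᵥ xbar k)) / μ) •
          ((1 - vecMulVec q (q ᵥ* M)) *ᵥ (M⁻¹ *ᵥ r k))))
    (hxmin : ∀ k,
      x (k+1) ∈ Xset A M q ∩
        (Submodule.span ℝ {q, x k, xbar k, M⁻¹ *ᵥ r k} :
          Submodule ℝ (Fin (n+2) → ℝ)) ∧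
      ∀ v ∈ Xset A M q ∩
        (Submodule.span ℝ {q, x k, xbar k, M⁻¹ *ᵥ r k} :
          Submodule ℝ (Fin (n+2) → ℝ)),
        Rq A M (x (k+1)) ≤ Rq A M v) :
    (∀ k, Rq A M (x (k+1)) ≤ Rq A M (x k)) ∧
    ∀ k : ℕ, Rq A M (x k) - lam 0 ≤ 2 * (1 - τ) ^ k * (Rq A M (x 0) - lam 0) := by
  subst hB hρq hκ
  exact stmt_17_general hM hq1 hQMQ hQMq hlam0 hlam01 hmono heig horth hximin hximax hχI hμ hL hμpos
    hτ0.le hτ hρ2 ⟨hx0, hz0, hxbar, hr, hz, hxmin⟩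
    (EIC.mul_le_of_le_div_max hinit1 (sub_nonneg.mpr hρ1) hinit2)
end

section
/- Suppose T is an n×n symmetric positive definite matrix and P = QᵀTQ. Then for any z ∈ ℝⁿ, QP⁻¹Qᵀz = ΠT⁻¹z, where q̃ = T⁻¹Mq and Π = I − q̃qᵀM/(qᵀMq̃) is the complementation of the oblique projector q̃qᵀM/(qᵀMq̃). -/
open Matrix

/-!
Let `u ᵥ* Q = 0` and let `Π` be the projector onto the kernel of `u` along `x = T⁻¹ *ᵥ v`. The range
of `Q` is a hyperplane, hence all of `ker u`, so `Π * T⁻¹ = Q * X` for some `X`. Since `R *ᵥ v = 0`,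
the correction `x uᵀ` is invisible to `R * T`, so `R * T * (Π * T⁻¹) = R`. Together,
`(R * T * Q) * X = R`, that is, `X = (R * T * Q)⁻¹ * R`. The theorem is the case `u = q ᵥ* M`,
`v = M *ᵥ q`, `R = Qᵀ`.
-/

section CommRing

variable {A m n : Type*} [CommRing A] [Fintype m] [Fintype n] [DecidableEq m]

theorem mul_add_vecMulVec_eq_one_of_biorthogonal [DecidableEq n]
    (hcard : Fintype.card n = Fintype.card m + 1)
    {Q : Matrix n m A} {L : Matrix m n A} {x u : n → A}
    (hLQ : L * Q = 1) (hLx : L *ᵥ x = 0) (huQ : u ᵥ* Q = 0) (hux : u ⬝ᵥ x = 1) :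
    Q * L + vecMulVec x u = 1 := by
  have hleft : fromRows L (replicateRow Unit u) * fromCols Q (replicateCol Unit x) = 1 := by
    have hone : replicateRow Unit u * replicateCol Unit x = 1 := by
      ext
      simp [hux]
    rw [fromRows_mul_fromCols, hLQ, ← replicateCol_mulVec, hLx, ← replicateRow_vecMul, huQ, hone,
      replicateCol_zero, replicateRow_zero, fromBlocks_one]
  have hright := (mul_eq_one_comm_of_card_eq _ _ _ (by simp [hcard])).1 hleft
  rwa [fromCols_mul_fromRows, ← vecMulVec_eq] at hright

theorem inv_mul_eq_of_mul_eq_of_mul_eq_one {P : Matrix m m A} {R X : Matrix m n A}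
    {S : Matrix n m A} (hPX : P * X = R) (hRS : R * S = 1) : P⁻¹ * R = X := by
  have hP : IsUnit P.det :=
    isUnit_det_of_right_inverse (B := X * S) (by rw [← Matrix.mul_assoc, hPX, hRS])
  rw [← hPX, nonsing_inv_mul_cancel_left _ _ hP]

end CommRing

section Field

variable {K m n : Type*} [Field K] [Fintype n]

/-- The projector `x uᵀ / (uᵀ x)` onto the line spanned by `x` along the kernel of `u`. It has
this meaning only for `u ⬝ᵥ x ≠ 0`, and is `0` otherwise. -/
def obliqueProj (x u : n → K) : Matrix n n K :=
  (u ⬝ᵥ x)⁻¹ • vecMulVec x u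

theorem obliqueProj_eq_vecMulVec (x u : n → K) :
    obliqueProj x u = vecMulVec ((u ⬝ᵥ x)⁻¹ • x) u :=
  (smul_vecMulVec _ _ _).symm

theorem obliqueProj_mulVec_self {x u : n → K} (hux : u ⬝ᵥ x ≠ 0) :
    obliqueProj x u *ᵥ x = x := by
  simp [obliqueProj, smul_mulVec, vecMulVec_mulVec, hux]

theorem obliqueProj_mul_eq_zero (x : n → K) {u : n → K} {Q : Matrix n m K}
    (huQ : u ᵥ* Q = 0) : obliqueProj x u * Q = 0 := by
  rw [obliqueProj_eq_vecMulVec, vecMulVec_mul, huQ]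
  ext
  simp [vecMulVec_apply]

theorem mul_obliqueProj_eq_zero {x : n → K} (u : n → K) {R : Matrix m n K}
    (hRx : R *ᵥ x = 0) : R * obliqueProj x u = 0 := by
  rw [obliqueProj, Matrix.mul_smul, mul_vecMulVec, hRx, zero_vecMulVec, smul_zero]

variable [Fintype m] [DecidableEq m] [DecidableEq n]

theorem mul_mul_one_sub_obliqueProj (hcard : Fintype.card n = Fintype.card m + 1)
    {Q : Matrix n m K} {L : Matrix m n K} {x u : n → K}
    (hLQ : L * Q = 1) (huQ : u ᵥ* Q = 0) (hux : u ⬝ᵥ x ≠ 0) :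
    Q * (L * (1 - obliqueProj x u)) = 1 - obliqueProj x u := by
  rw [eq_sub_iff_add_eq, obliqueProj_eq_vecMulVec]
  apply mul_add_vecMulVec_eq_one_of_biorthogonal hcard
  · rw [← obliqueProj_eq_vecMulVec, Matrix.mul_assoc, Matrix.sub_mul, Matrix.one_mul,
      obliqueProj_mul_eq_zero x huQ, sub_zero, hLQ]
  · rw [← obliqueProj_eq_vecMulVec, mulVec_smul, ← mulVec_mulVec, sub_mulVec, one_mulVec,
      obliqueProj_mulVec_self hux, sub_self, mulVec_zero, smul_zero]
  · exact huQ
  · rw [dotProduct_smul, smul_eq_mul, inv_mul_cancel₀ hux]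

theorem stmt_18_general (hcard : Fintype.card n = Fintype.card m + 1)
    {T : Matrix n n K} (hT : IsUnit T.det)
    {Q : Matrix n m K} {L : Matrix m n K} (hLQ : L * Q = 1)
    {R : Matrix m n K} {S : Matrix n m K} (hRS : R * S = 1)
    {u v : n → K} (huQ : u ᵥ* Q = 0) (hRv : R *ᵥ v = 0) (huv : u ⬝ᵥ (T⁻¹ *ᵥ v) ≠ 0) :
    Q * (R * T * Q)⁻¹ * R = (1 - obliqueProj (T⁻¹ *ᵥ v) u) * T⁻¹ := by
  set C := 1 - obliqueProj (T⁻¹ *ᵥ v) u with hC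
  have hrange : Q * (L * C) = C := mul_mul_one_sub_obliqueProj hcard hLQ huQ huv
  have hRTv : (R * T) *ᵥ (T⁻¹ *ᵥ v) = 0 := by
    rw [mulVec_mulVec, mul_nonsing_inv_cancel_right _ _ hT, hRv]
  have hRTC : R * T * C = R * T := by
    rw [hC, Matrix.mul_sub, Matrix.mul_one, mul_obliqueProj_eq_zero u hRTv, sub_zero]
  have hPX : R * T * Q * (L * C * T⁻¹) = R := calc
    R * T * Q * (L * C * T⁻¹) = R * T * (Q * (L * C)) * T⁻¹ := by simp only [Matrix.mul_assoc]
    _ = R := by rw [hrange, hRTC, mul_nonsing_inv_cancel_right _ _ hT]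
  rw [Matrix.mul_assoc, inv_mul_eq_of_mul_eq_of_mul_eq_one hPX hRS, ← Matrix.mul_assoc, hrange]

end Field

/-- If T is SPD and P = QᵀTQ, then for any z, QP⁻¹Qᵀz = ΠT⁻¹z, where
q̃ = T⁻¹Mq and Π = I − q̃qᵀM/(qᵀMq̃). -/
theorem stmt_18 (n : ℕ)
    (M T : Matrix (Fin (n+2)) (Fin (n+2)) ℝ)
    (hM : M.PosDef) (hT : T.PosDef)
    (q : Fin (n+2) → ℝ) (Q : Matrix (Fin (n+2)) (Fin (n+1)) ℝ)
    (hq1 : q ⬝ᵥ (M *ᵥ q) = 1)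
    (hQMQ : Qᵀ * M * Q = 1)
    (hQMq : (Qᵀ * M) *ᵥ q = 0)
    (P : Matrix (Fin (n+1)) (Fin (n+1)) ℝ) (hP : P = Qᵀ * T * Q)
    (qt : Fin (n+2) → ℝ) (hqt : qt = T⁻¹ *ᵥ (M *ᵥ q))
    (Pi : Matrix (Fin (n+2)) (Fin (n+2)) ℝ)
    (hPi : Pi = 1 - (q ⬝ᵥ (M *ᵥ qt))⁻¹ • vecMulVec qt (q ᵥ* M)) :
    ∀ z : Fin (n+2) → ℝ, Q *ᵥ (P⁻¹ *ᵥ (Qᵀ *ᵥ z)) = Pi *ᵥ (T⁻¹ *ᵥ z) := by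
  intro z
  have hqM : q ᵥ* M = M *ᵥ q := by
    rw [← mulVec_transpose, (isHermitian_iff_isSymm.1 hM.isHermitian).eq]
  have hMq : M *ᵥ q ≠ 0 := fun h ↦ by simp [h] at hq1
  have hc : (q ᵥ* M) ⬝ᵥ (T⁻¹ *ᵥ (M *ᵥ q)) ≠ 0 :=
    hqM ▸ (hT.inv.dotProduct_mulVec_pos hMq).ne'
  have hQtMq : Qᵀ *ᵥ (M *ᵥ q) = 0 := by rw [mulVec_mulVec, hQMq]
  have hqMQ : (q ᵥ* M) ᵥ* Q = 0 := by
    rw [hqM, ← mulVec_transpose, hQtMq]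
  have hQtMQ : Qᵀ * (M * Q) = 1 := by rw [← Matrix.mul_assoc, hQMQ]
  have hmatrix := stmt_18_general (by simp) hT.det_pos.ne'.isUnit hQMQ hQtMQ hqMQ hQtMq hc
  rw [hPi, hP, hqt, dotProduct_mulVec]
  simpa only [mulVec_mulVec, Matrix.mul_assoc, obliqueProj] using congrArg (· *ᵥ z) hmatrix
end
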